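/- Let k ≥ 2, r ≥ 0 and t ≥ 2 be fixed integers, let C_s = 2^{2^{s−1}−1} · 10^{2^{s+2}−2} · (k² t⁴ (r+1)⁷)^{2^{s−1}}, let n ≥ C_1·(3t·C_t)^{2t}, and let δ ∈ [60k²(r+1)⁶t⁴/C_1, 1 − 60k²(r+1)⁶t⁴/C_1] ∪ {1}. Let F ⊆ C([n],k) have size |F| = Σ_{i=t}^{t+r−1} C(n−i, k−t) + δ·C(n−(t+r), k−t) and satisfy I(F) = MI(F). If F contains no full t-star, then there exists an element x0 ∈ [n] such that x0 ∈ F for all F ∈ F. -/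

import Mathlib

open Finset

/-- The total intersection of a family: `I(F) = ∑_{A∈F} ∑_{B∈F} |A ∩ B|`. -/
def totalInt (F : Finset (Finset ℕ)) : ℕ :=
  ∑ A ∈ F, ∑ B ∈ F, (A ∩ B).card

/-- The degree of a set `S` in the family `F`: the number of members of `F` containing `S`. -/
def degF (F : Finset (Finset ℕ)) (S : Finset ℕ) : ℕ :=
  (F.filter fun A => S ⊆ A).card

/-- `A` strictly precedes `B` in the lexicographic order on finite sets of positive integers:
the minimal element of the symmetric difference `A Δ B` belongs to `A`. -/
def lexLt (A B : Finset ℕ) : Prop :=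
  ∃ m ∈ A \ B, ∀ x ∈ (A \ B) ∪ (B \ A), m ≤ x

/-- `S` is an initial segment (prefix) of the `k`-element subsets of `[n] = {1,…,n}`
under the lexicographic order. -/
def IsLexPrefix (n k : ℕ) (S : Finset (Finset ℕ)) : Prop :=
  S ⊆ (Icc 1 n).powersetCard k ∧
    ∀ A ∈ S, ∀ B ∈ (Icc 1 n).powersetCard k, lexLt B A → B ∈ S

/-- The cardinality of the family `L_{n,k,t}^{(r)}`:
`C(n−t+1, k−t+1) − C(n−(t+r−1), k−t+1)`. -/
def lexStarCard (n k t r : ℕ) : ℕ :=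
  (n - t + 1).choose (k - t + 1) - (n - (t + r - 1)).choose (k - t + 1)

/-- The full `t`-star with core `Y`: all `k`-subsets of `[n]` containing `Y`. -/
def fullStar (n k : ℕ) (Y : Finset ℕ) : Finset (Finset ℕ) :=
  ((Icc 1 n).powersetCard k).filter fun A => Y ⊆ A

/-- The constant `C_s = 2^{2^{s−1}−1} · 10^{2^{s+2}−2} · (k² t⁴ (r+1)⁷)^{2^{s−1}}`. -/
def Cconst (k t r s : ℕ) : ℕ :=
  2 ^ (2 ^ (s - 1) - 1) * 10 ^ (2 ^ (s + 2) - 2) * (k ^ 2 * t ^ 4 * (r + 1) ^ 7) ^ (2 ^ (s - 1))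



noncomputable def dg (F : Finset (Finset ℕ)) (x : ℕ) : ℝ := ∑ A ∈ F, if x ∈ A then (1:ℝ) else 0

lemma dg_eq (F : Finset (Finset ℕ)) (x : ℕ) : dg F x = ((F.filter (fun A => x ∈ A)).card : ℝ) := by
  simp [dg]

lemma dg_nonneg (F : Finset (Finset ℕ)) (x : ℕ) : 0 ≤ dg F x := by
  rw [dg_eq]; positivity

lemma dg_le (F : Finset (Finset ℕ)) (x : ℕ) : dg F x ≤ F.card := by
  rw [dg_eq]; exact_mod_cast card_filter_le _ _

lemma sum_dg_gen (F : Finset (Finset ℕ)) (S : Finset ℕ) :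
    ∑ x ∈ S, dg F x = ∑ A ∈ F, ((A ∩ S).card : ℝ) := by
  unfold dg
  rw [sum_comm]
  refine sum_congr rfl fun A _ => ?_
  rw [sum_boole, inter_comm, filter_mem_eq_inter]

lemma totalInt_w (F : Finset (Finset ℕ)) :
    (totalInt F : ℝ) = ∑ A ∈ F, ∑ x ∈ A, dg F x := by
  unfold totalInt
  push_cast
  refine sum_congr rfl fun A _ => ?_
  rw [sum_dg_gen]
  refine sum_congr rfl fun B _ => ?_
  rw [inter_comm]

lemma sum_w_sq (F : Finset (Finset ℕ)) (S : Finset ℕ) (h : ∀ A ∈ F, A ⊆ S) (f : ℕ → ℝ) :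
    ∑ A ∈ F, ∑ x ∈ A, f x = ∑ x ∈ S, dg F x * f x := by
  unfold dg
  simp_rw [sum_mul]
  rw [sum_comm]
  refine sum_congr rfl fun A hA => ?_
  simp only [ite_mul, one_mul, zero_mul]
  rw [← sum_filter, filter_mem_eq_inter, inter_eq_right.2 (h A hA)]

lemma totalInt_sq (F : Finset (Finset ℕ)) (S : Finset ℕ) (h : ∀ A ∈ F, A ⊆ S) :
    (totalInt F : ℝ) = ∑ x ∈ S, dg F x ^ 2 := by
  rw [totalInt_w, sum_w_sq F S h]
  exact sum_congr rfl fun x _ => (sq _).symm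

lemma swap (F : Finset (Finset ℕ)) (n k : ℕ) (hF : F ⊆ (Icc 1 n).powersetCard k)
    (hopt : ∀ G ⊆ (Icc 1 n).powersetCard k, G.card = F.card → totalInt G ≤ totalInt F)
    (A B : Finset ℕ) (hA : A ∈ F) (hB : B ∈ (Icc 1 n).powersetCard k) (hBF : B ∉ F) :
    ∑ x ∈ B, dg F x ≤ ∑ x ∈ A, dg F x := by
  have hsub : ∀ A ∈ F, A ⊆ Icc 1 n := fun A hA => (mem_powersetCard.1 (hF hA)).1
  have hBe : B ∉ F.erase A := fun h => hBF (mem_of_mem_erase h)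
  have hG : insert B (F.erase A) ⊆ (Icc 1 n).powersetCard k := by
    intro C hC
    rcases mem_insert.1 hC with rfl | h
    · exact hB
    · exact hF (mem_of_mem_erase h)
  have hcard : (insert B (F.erase A)).card = F.card := by
    rw [card_insert_of_notMem hBe, card_erase_of_mem hA]
    have := card_pos.2 ⟨A, hA⟩
    omega
  have h1 : (totalInt (insert B (F.erase A)) : ℝ) ≤ totalInt F := by
    exact_mod_cast hopt _ hG hcard
  rw [totalInt_sq _ (Icc 1 n) (fun A hA => (mem_powersetCard.1 (hG hA)).1),
    totalInt_sq _ (Icc 1 n) hsub] at h1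
  have hd : ∀ x, dg (insert B (F.erase A)) x =
      dg F x + ((if x ∈ B then (1:ℝ) else 0) - (if x ∈ A then (1:ℝ) else 0)) := by
    intro x
    unfold dg
    rw [sum_insert hBe, ← add_sum_erase F _ hA]
    ring
  have hs : ∀ C ⊆ Icc 1 n, ∑ x ∈ C, dg F x = ∑ x ∈ Icc 1 n, (if x ∈ C then (1:ℝ) else 0) * dg F x := by
    intro C hC
    simp only [ite_mul, one_mul, zero_mul]
    rw [← sum_filter, filter_mem_eq_inter, inter_eq_right.2 hC]
  rw [hs B (mem_powersetCard.1 hB).1, hs A (hsub A hA)]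
  have h2 : ∑ x ∈ Icc 1 n, (dg F x ^ 2 + 2 * ((if x ∈ B then (1:ℝ) else 0) * dg F x -
      (if x ∈ A then (1:ℝ) else 0) * dg F x)) ≤ ∑ x ∈ Icc 1 n, dg (insert B (F.erase A)) x ^ 2 := by
    refine sum_le_sum fun x _ => ?_
    rw [hd]
    nlinarith [sq_nonneg ((if x ∈ B then (1:ℝ) else 0) - (if x ∈ A then (1:ℝ) else 0))]
  rw [sum_add_distrib, ← mul_sum, sum_sub_distrib] at h2
  linarith

lemma star_card (n k : ℕ) (Y Z : Finset ℕ) (hY : Y ⊆ Icc 1 n) (hZ : Z ⊆ Icc 1 n)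
    (hd : Disjoint Y Z) (hk : Y.card ≤ k) :
    (((Icc 1 n).powersetCard k).filter fun A => Y ⊆ A ∧ Disjoint Z A).card =
      (n - Y.card - Z.card).choose (k - Y.card) := by
  have hc : ((Icc 1 n) \ (Y ∪ Z)).card = n - Y.card - Z.card := by
    rw [card_sdiff_of_subset (union_subset hY hZ), card_union_of_disjoint hd]
    simp; omega
  rw [← hc, ← card_powersetCard]
  refine card_bij' (fun A _ => A \ Y) (fun B _ => B ∪ Y) ?_ ?_ ?_ ?_
  · intro A hA
    simp only [mem_filter, mem_powersetCard] at hA ⊢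
    obtain ⟨⟨h1, h2⟩, h3, h4⟩ := hA
    refine ⟨?_, by rw [card_sdiff_of_subset h3, h2]⟩
    intro x hx
    have := mem_sdiff.1 hx
    simp only [mem_sdiff, mem_union, not_or]
    exact ⟨h1 this.1, this.2, fun hz => (disjoint_left.1 h4 hz) this.1⟩
  · intro B hB
    simp only [mem_filter, mem_powersetCard] at hB ⊢
    obtain ⟨h1, h2⟩ := hB
    have hdis : Disjoint B Y := by
      rw [disjoint_left]; intro x hx hy
      have := mem_sdiff.1 (h1 hx)
      exact this.2 (mem_union_left _ hy)
    refine ⟨⟨union_subset (h1.trans sdiff_subset) hY, ?_⟩, subset_union_right, ?_⟩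
    · rw [card_union_of_disjoint hdis, h2]; omega
    · rw [disjoint_left]; intro x hx hy
      rcases mem_union.1 hy with h | h
      · exact (mem_sdiff.1 (h1 h)).2 (mem_union_right _ hx)
      · exact disjoint_left.1 hd h hx
  · intro A hA
    simp only [mem_filter] at hA
    exact sdiff_union_of_subset hA.2.1
  · intro B hB
    have h1 := (mem_powersetCard.1 hB).1
    have hdis : Disjoint B Y := by
      rw [disjoint_left]; intro x hx hy
      have := mem_sdiff.1 (h1 hx)
      exact this.2 (mem_union_left _ hy)
    exact union_sdiff_cancel_right hdis

lemma star_card' (n k : ℕ) (Y : Finset ℕ) (hY : Y ⊆ Icc 1 n) (hk : Y.card ≤ k) :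
    (((Icc 1 n).powersetCard k).filter fun A => Y ⊆ A).card =
      (n - Y.card).choose (k - Y.card) := by
  have := star_card n k Y ∅ hY (by simp) (by simp) hk
  simpa using this

lemma star_le (n k : ℕ) (F : Finset (Finset ℕ)) (hF : F ⊆ (Icc 1 n).powersetCard k)
    (Y : Finset ℕ) (hY : Y ⊆ Icc 1 n) (hk : Y.card ≤ k) :
    (F.filter fun A => Y ⊆ A).card ≤ (n - Y.card).choose (k - Y.card) := by
  rw [← star_card' n k Y hY hk]
  exact card_le_card (filter_subset_filter _ hF)


set_option maxHeartbeats 2000000 in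
lemma core (n k t : ℕ) (F : Finset (Finset ℕ)) (hF : F ⊆ (Icc 1 n).powersetCard k)
    (ht : 2 ≤ t) (htk : t < k) (η c : ℝ) (hη : 0 < η) (hη1 : η ≤ 1 / 4) (hM : 0 < F.card)
    (hI : ((t:ℝ) - 1 + c) * (F.card:ℝ) ^ 2 ≤ totalInt F)
    (hat : ∀ H ⊆ Icc 1 n, (H.card:ℝ) * η ≤ (k:ℝ) ^ 2 →
      (k:ℝ) * ((F.filter fun A => t < (A ∩ H).card).card : ℝ) ≤ η * F.card)
    (hW : ∀ Y ∈ (Icc 1 n).powersetCard t, ∀ A ∈ F, ∑ x ∈ Y, dg F x ≤ ∑ x ∈ A, dg F x)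
    (hnc : ∀ x ∈ Icc 1 n, ∃ A ∈ F, x ∉ A)
    (hc1 : 5 * η < c) (hc2 : ((t:ℝ) ^ 2 + 5 * t + 4) * η < (t + 2) * c) :
    ((t:ℝ) + 1) * c ≤ 1 + ((t:ℝ) ^ 2 + 4 * t + 2) * η ∧
      ∃ T ∈ (Icc 1 n).powersetCard (t + 1), ∀ A ∈ F, t ≤ (A ∩ T).card := by
  have hsub : ∀ A ∈ F, A ⊆ Icc 1 n := fun A hA => (mem_powersetCard.1 (hF hA)).1
  have hAk : ∀ A ∈ F, A.card = k := fun A hA => (mem_powersetCard.1 (hF hA)).2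
  have hMr : (0:ℝ) < F.card := by exact_mod_cast hM
  have htr : (2:ℝ) ≤ t := by exact_mod_cast ht
  have htkr : (t:ℝ) + 1 ≤ k := by exact_mod_cast htk
  have hkr : (0:ℝ) < k := by linarith
  set M : ℝ := (F.card : ℝ) with hMdef
  set d := dg F with hd
  have hd0 : ∀ x, 0 ≤ d x := dg_nonneg F
  have hdM : ∀ x, d x ≤ M := dg_le F
  set H := (Icc 1 n).filter (fun x => η * M ≤ k * d x) with hH
  have hHsub : H ⊆ Icc 1 n := filter_subset _ _
  have hsumk : ∑ x ∈ H, d x ≤ k * M := by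
    rw [hd, sum_dg_gen]
    calc ∑ A ∈ F, ((A ∩ H).card : ℝ) ≤ ∑ A ∈ F, (k:ℝ) := by
          refine sum_le_sum fun A hA => ?_
          rw [← hAk A hA]
          exact_mod_cast card_le_card inter_subset_left
      _ = k * M := by rw [sum_const, nsmul_eq_mul]; ring
  have hHcard : (H.card : ℝ) * η ≤ (k:ℝ) ^ 2 := by
    have h1 : ∑ x ∈ H, η * M ≤ ∑ x ∈ H, k * d x :=
      sum_le_sum fun x hx => (mem_filter.1 hx).2
    rw [sum_const, nsmul_eq_mul, ← mul_sum] at h1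
    have h2 : (H.card:ℝ) * η * M ≤ (k:ℝ)^2 * M := by nlinarith
    exact le_of_mul_le_mul_right h2 hMr
  have hatH := hat H hHsub hHcard
  set a : ℝ := ((F.filter fun A => t < (A ∩ H).card).card : ℝ) with ha
  have ha0 : 0 ≤ a := by positivity
  have hlight : ∀ A ∈ F, ∑ x ∈ A, d x ≤ ∑ x ∈ A ∩ H, d x + η * M := by
    intro A hA
    have h1 : (∑ x ∈ A ∩ H, d x) + ∑ x ∈ A \ H, d x = ∑ x ∈ A, d x :=
      sum_inter_add_sum_sdiff A H d
    have h2 : ∑ x ∈ A \ H, k * d x ≤ ∑ x ∈ A \ H, η * M := by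
      refine sum_le_sum fun x hx => ?_
      have h3 := mem_sdiff.1 hx
      by_contra hcon
      exact h3.2 (mem_filter.2 ⟨hsub A hA h3.1, (not_le.1 hcon).le⟩)
    rw [← mul_sum, sum_const, nsmul_eq_mul] at h2
    have h4 : ((A \ H).card : ℝ) ≤ k := by
      rw [← hAk A hA]; exact_mod_cast card_le_card sdiff_subset
    have h5 : ((A \ H).card : ℝ) * (η * M) ≤ k * (η * M) :=
      mul_le_mul_of_nonneg_right h4 (by positivity)
    have h6 : ∑ x ∈ A \ H, d x ≤ η * M := le_of_mul_le_mul_left (h2.trans h5) hkr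
    linarith
  have hSH : ∑ x ∈ H, d x ≤ t * M + η * M := by
    rw [hd, sum_dg_gen]
    calc ∑ A ∈ F, ((A ∩ H).card : ℝ) ≤ ∑ A ∈ F, ((t:ℝ) + if t < (A ∩ H).card then (k:ℝ) else 0) := by
          refine sum_le_sum fun A hA => ?_
          split_ifs with h
          · have : ((A ∩ H).card : ℝ) ≤ k := by
              rw [← hAk A hA]
              exact_mod_cast card_le_card inter_subset_left
            linarith
          · push Not at h
            rw [add_zero]; exact_mod_cast h
      _ = t * M + k * a := by
          rw [sum_add_distrib, sum_const, nsmul_eq_mul, ← sum_filter, sum_const, nsmul_eq_mul]; ring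
      _ ≤ _ := by linarith
  obtain ⟨A0, hA0⟩ := card_pos.1 hM
  have hne : ((Icc 1 n).powersetCard t).Nonempty := by
    obtain ⟨Y, hY, hYc⟩ := exists_subset_card_eq (s := A0) (n := t) (by rw [hAk A0 hA0]; omega)
    exact ⟨Y, mem_powersetCard.2 ⟨hY.trans (hsub A0 hA0), hYc⟩⟩
  obtain ⟨Y0, hY0, hY0max⟩ := exists_max_image _ (fun Y => ∑ x ∈ Y, d x) hne
  set W := ∑ x ∈ Y0, d x with hWdef
  have hWA : ∀ A ∈ F, W ≤ ∑ x ∈ A, d x := fun A hA => hW Y0 hY0 A hA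
  have hW0 : 0 ≤ W := sum_nonneg fun x _ => hd0 x
  have hYt : ∀ A ∈ F, (A ∩ H).card ≤ t → ∃ Y ⊆ A, Y.card = t ∧ ∑ x ∈ A, d x ≤ ∑ x ∈ Y, d x + η * M := by
    intro A hA hAt
    obtain ⟨Y, h1, h2, h3⟩ := exists_subsuperset_card_eq (inter_subset_left : A ∩ H ⊆ A) hAt
      (by rw [hAk A hA]; omega)
    refine ⟨Y, h2, h3, (hlight A hA).trans ?_⟩
    have := sum_le_sum_of_subset_of_nonneg h1 (fun x _ _ => hd0 x)
    linarith
  have hWlow0 : (totalInt F : ℝ) ≤ M * W + 2 * η * M ^ 2 := by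
    rw [totalInt_w]
    calc ∑ A ∈ F, ∑ x ∈ A, dg F x
        ≤ ∑ A ∈ F, (W + η * M + if t < (A ∩ H).card then (k:ℝ) * M else 0) := by
          refine sum_le_sum fun A hA => ?_
          split_ifs with h
          · have : ∑ x ∈ A, dg F x ≤ ∑ x ∈ A, M := sum_le_sum fun x _ => hdM x
            rw [sum_const, nsmul_eq_mul, hAk A hA] at this
            have : 0 ≤ η * M := by positivity
            linarith
          · push Not at h
            obtain ⟨Y, h1, h2, h3⟩ := hYt A hA h
            have := hY0max Y (mem_powersetCard.2 ⟨h1.trans (hsub A hA), h2⟩)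
            linarith
      _ = M * (W + η * M) + (k * a) * M := by
          rw [sum_add_distrib, sum_const, nsmul_eq_mul, ← sum_filter, sum_const, nsmul_eq_mul]; ring
      _ ≤ _ := by nlinarith
  have hWlow : ((t:ℝ) - 1 + c - 2 * η) * M ≤ W := by
    have : (((t:ℝ) - 1 + c - 2 * η) * M) * M ≤ W * M := by nlinarith
    exact le_of_mul_le_mul_right this hMr
  -- upper bound for degrees
  have hup : ∀ x ∈ H, d x ≤ (t + 2 * η) * M - W := by
    intro x hx
    obtain ⟨A, hA, hxA⟩ := hnc x (hHsub hx)
    have h1 := hWA A hA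
    have h2 := hlight A hA
    have h3 : ∑ y ∈ A ∩ H, d y ≤ ∑ y ∈ H.erase x, d y := by
      refine sum_le_sum_of_subset_of_nonneg ?_ (fun x _ _ => hd0 x)
      intro y hy
      have := mem_inter.1 hy
      exact mem_erase.2 ⟨fun h => hxA (h ▸ this.1), this.2⟩
    have h4 := add_sum_erase H d hx
    linarith
  have hIne : (Icc 1 n).Nonempty := by
    have : A0.Nonempty := card_pos.1 (by rw [hAk A0 hA0]; omega)
    obtain ⟨x, hx⟩ := this
    exact ⟨x, hsub A0 hA0 hx⟩
  obtain ⟨x1, hx1, hx1max⟩ := exists_max_image _ d hIne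
  set D := d x1 with hD
  have hWD : W ≤ t * D := by
    have h1 : W ≤ ∑ x ∈ Y0, D := sum_le_sum fun x hx => hx1max x ((mem_powersetCard.1 hY0).1 hx)
    rw [sum_const, nsmul_eq_mul, (mem_powersetCard.1 hY0).2] at h1
    exact h1
  have hDbig : M ≤ 2 * D := by
    have h1 : ((t:ℝ) - 1) * M ≤ t * D := by nlinarith
    have h2 : (t:ℝ) * M ≤ t * (2 * D) := by nlinarith
    exact le_of_mul_le_mul_left h2 (by linarith)
  have hmemH : ∀ x ∈ Icc 1 n, η * M ≤ d x → x ∈ H := by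
    intro x hx h
    refine mem_filter.2 ⟨hx, h.trans ?_⟩
    nlinarith [hd0 x]
  have hx1H : x1 ∈ H := hmemH x1 hx1 (by nlinarith)
  have hDup := hup x1 hx1H
  -- a typical set missing x1
  have hex : ∃ A ∈ F, (A ∩ H).card ≤ t ∧ x1 ∉ A := by
    by_contra hcon
    push Not at hcon
    have h1 : M ≤ a + D := by
      rw [hD, hd, dg_eq, ha, hMdef]
      have : F ⊆ (F.filter fun A => t < (A ∩ H).card) ∪ F.filter (fun A => x1 ∈ A) := by
        intro A hA
        rw [mem_union, mem_filter, mem_filter]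
        by_cases h : t < (A ∩ H).card
        · exact Or.inl ⟨hA, h⟩
        · exact Or.inr ⟨hA, hcon A hA (not_lt.1 h)⟩
      have := (card_le_card this).trans (card_union_le _ _)
      exact_mod_cast this
    have h2 : a ≤ k * a := le_mul_of_one_le_left ha0 (by linarith)
    have h3 := mul_lt_mul_of_pos_right hc1 hMr
    linarith
  obtain ⟨A1, hA1, hA1t, hx1A⟩ := hex
  obtain ⟨Y1, hY1A, hY1c, hY1w⟩ := hYt A1 hA1 hA1t
  have hY1W : W ≤ ∑ x ∈ Y1, d x + η * M := (hWA A1 hA1).trans hY1w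
  have hx1Y : x1 ∉ Y1 := fun h => hx1A (hY1A h)
  have hY1I : Y1 ⊆ Icc 1 n := hY1A.trans (hsub A1 hA1)
  have hyD : ∀ y ∈ Y1, D - η * M ≤ d y := by
    intro y hy
    have hx1' : x1 ∉ Y1.erase y := fun h => hx1Y (mem_of_mem_erase h)
    have h1 := hY0max (insert x1 (Y1.erase y)) (by
      refine mem_powersetCard.2 ⟨insert_subset hx1 ((erase_subset _ _).trans hY1I), ?_⟩
      rw [card_insert_of_notMem hx1', card_erase_of_mem hy]; omega)
    rw [sum_insert hx1'] at h1
    have h2 := add_sum_erase Y1 d hy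
    linarith
  set T := insert x1 Y1 with hT
  have hTc : T.card = t + 1 := by rw [hT, card_insert_of_notMem hx1Y, hY1c]
  have hTI : T ⊆ Icc 1 n := insert_subset hx1 hY1I
  have hTD : ∀ y ∈ T, D - η * M ≤ d y := by
    intro y hy
    rcases mem_insert.1 hy with rfl | h
    · have : 0 ≤ η * M := by positivity
      linarith
    · exact hyD y h
  have hTH : T ⊆ H := by
    intro y hy
    refine hmemH y (hTI hy) (le_trans ?_ (hTD y hy))
    nlinarith
  have hTsum : ((t:ℝ) + 1) * (D - η * M) ≤ ∑ x ∈ T, d x := by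
    have h1 : ∑ x ∈ T, (D - η * M) ≤ ∑ x ∈ T, d x := sum_le_sum hTD
    rw [sum_const, nsmul_eq_mul, hTc] at h1
    push_cast at h1; exact h1
  have hHT : ∑ x ∈ H \ T, d x ≤ t * M + η * M - ((t:ℝ) + 1) * (D - η * M) := by
    have := sum_sdiff (f := d) hTH
    linarith
  have hHT0 : 0 ≤ ∑ x ∈ H \ T, d x := sum_nonneg fun x _ => hd0 x
  constructor
  · have h1 : ((t:ℝ) + 1) * (((t:ℝ) - 1 + c - 2 * η) * M) ≤ (t + 1) * (t * D) :=
      mul_le_mul_of_nonneg_left (hWlow.trans hWD) (by linarith)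
    have h2 : ((t:ℝ) + 1) * D ≤ (t + (t + 2) * η) * M := by nlinarith
    have h3 : (t:ℝ) * (((t:ℝ) + 1) * D) ≤ t * ((t + (t + 2) * η) * M) :=
      mul_le_mul_of_nonneg_left h2 (by linarith)
    have h4 : (((t:ℝ) + 1) * c) * M ≤ (1 + ((t:ℝ) ^ 2 + 4 * t + 2) * η) * M := by nlinarith
    exact le_of_mul_le_mul_right h4 hMr
  · refine ⟨T, mem_powersetCard.2 ⟨hTI, hTc⟩, ?_⟩
    intro A hA
    by_contra hcon
    push Not at hcon
    have h1 : ∑ x ∈ A ∩ H, d x ≤ ∑ x ∈ A ∩ T, d x + ∑ x ∈ H \ T, d x := by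
      rw [← sum_union]
      · refine sum_le_sum_of_subset_of_nonneg ?_ (fun x _ _ => hd0 x)
        intro y hy
        have := mem_inter.1 hy
        by_cases h : y ∈ T
        · exact mem_union_left _ (mem_inter.2 ⟨this.1, h⟩)
        · exact mem_union_right _ (mem_sdiff.2 ⟨this.2, h⟩)
      · rw [disjoint_left]; intro x hx hx'
        exact (mem_sdiff.1 hx').2 (mem_inter.1 hx).2
    have h2 : ∑ x ∈ A ∩ T, d x ≤ (t - 1) * D := by
      have h3 : ∑ x ∈ A ∩ T, d x ≤ ∑ x ∈ A ∩ T, D :=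
        sum_le_sum fun x hx => hx1max x (hTI (mem_inter.1 hx).2)
      rw [sum_const, nsmul_eq_mul] at h3
      have h4 : ((A ∩ T).card : ℝ) + 1 ≤ t := by exact_mod_cast hcon
      nlinarith [hd0 x1]
    have h5 := hWA A hA
    have h6 := hlight A hA
    have h7 : 2 * D ≤ (1 - c + (t + 5) * η) * M := by nlinarith
    have h8 : (t:ℝ) * (2 * D) ≤ t * ((1 - c + (t + 5) * η) * M) :=
      mul_le_mul_of_nonneg_left h7 (by linarith)
    have h9 : ((t - 2 + (t + 2) * c) - ((t:ℝ) ^ 2 + 5 * t + 4) * η) * M ≤ 0 := by nlinarith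
    have h10 : 0 < ((t - 2 + (t + 2) * c) - ((t:ℝ) ^ 2 + 5 * t + 4) * η) := by linarith
    have := mul_pos h10 hMr
    linarith


def stE (n k t i : ℕ) : Finset (Finset ℕ) :=
  ((Icc 1 n).powersetCard k).filter fun A => insert i (Icc 1 (t - 1)) ⊆ A ∧ Disjoint (Ico t i) A

def Lx (n k t r : ℕ) : Finset (Finset ℕ) :=
  ((Icc 1 n).powersetCard k).filter fun A => Icc 1 (t - 1) ⊆ A ∧ ∃ i ∈ Ico t (t + r), i ∈ A

lemma core_card (t i : ℕ) (ht : 1 ≤ t) (hi : t ≤ i) : (insert i (Icc 1 (t - 1))).card = t := by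
  rw [card_insert_of_notMem (by simp; omega)]
  simp; omega

lemma core_sub (n t i : ℕ) (ht : 1 ≤ t) (hi : t ≤ i) (hn : i ≤ n) :
    insert i (Icc 1 (t - 1)) ⊆ Icc 1 n := by
  intro x hx
  simp only [mem_insert, mem_Icc] at hx ⊢
  omega

lemma stE_card (n k t i : ℕ) (ht : 1 ≤ t) (htk : t ≤ k) (hi : t ≤ i) (hn : i ≤ n) :
    (stE n k t i).card = (n - i).choose (k - t) := by
  unfold stE
  rw [star_card n k _ _ (core_sub n t i ht hi hn), core_card t i ht hi]
  · congr 1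
    simp; omega
  · intro x hx
    simp only [mem_Ico, mem_Icc] at hx ⊢; omega
  · rw [disjoint_left]
    intro x hx
    simp only [mem_insert, mem_Icc, mem_Ico] at hx ⊢; omega
  · rw [core_card t i ht hi]; exact htk

lemma Lx_succ (n k t r : ℕ) : Lx n k t (r + 1) = Lx n k t r ∪ stE n k t (t + r) := by
  ext A
  simp only [Lx, stE, mem_union, mem_filter, insert_subset_iff]
  constructor
  · rintro ⟨h1, h2, i, hi, hiA⟩
    by_cases h : ∃ j ∈ Ico t (t + r), j ∈ A
    · exact Or.inl ⟨h1, h2, h⟩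
    · right
      push Not at h
      have : i = t + r := by
        by_contra hne
        refine h i ?_ hiA
        simp only [mem_Ico] at hi ⊢; omega
      subst this
      exact ⟨h1, ⟨hiA, h2⟩, disjoint_left.2 h⟩
  · rintro (⟨h1, h2, i, hi, hiA⟩ | ⟨h1, ⟨h2, h3⟩, h4⟩)
    · exact ⟨h1, h2, i, by simp only [mem_Ico] at hi ⊢; omega, hiA⟩
    · exact ⟨h1, h3, t + r, by simp, h2⟩

lemma Lx_disj (n k t r : ℕ) : Disjoint (Lx n k t r) (stE n k t (t + r)) := by
  rw [disjoint_left]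
  intro A hA hB
  simp only [Lx, stE, mem_filter] at hA hB
  obtain ⟨_, _, i, hi, hiA⟩ := hA
  exact disjoint_left.1 hB.2.2 hi hiA

lemma Lx_card (n k t r : ℕ) (ht : 1 ≤ t) (htk : t ≤ k) (hn : t + r ≤ n + 1) :
    (Lx n k t r).card = ∑ i ∈ range r, (n - (t + i)).choose (k - t) := by
  induction r with
  | zero => simp [Lx]
  | succ r ih =>
    rw [Lx_succ, card_union_of_disjoint (Lx_disj n k t r), ih (by omega),
      stE_card n k t (t + r) ht htk (by omega) (by omega), sum_range_succ]

lemma Lx_dg (n k t r : ℕ) (G : Finset (Finset ℕ)) (hG : Lx n k t r ⊆ G) (i : ℕ) (ht : 1 ≤ t)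
    (htk : t ≤ k) (hi : i < r) (hn : t + i ≤ n) :
    ((n - t).choose (k - t) : ℝ) ≤ dg G (t + i) := by
  rw [dg_eq]
  have h := star_card' n k (insert (t + i) (Icc 1 (t - 1))) (core_sub n t _ ht (by omega) hn)
    (by rw [core_card t _ ht (by omega)]; exact htk)
  rw [core_card t _ ht (by omega)] at h
  rw [← h]
  norm_cast
  apply card_le_card
  intro A hA
  simp only [mem_filter, insert_subset_iff] at hA ⊢
  refine ⟨hG ?_, hA.2.1⟩
  simp only [Lx, mem_filter]
  exact ⟨hA.1, hA.2.2, t + i, by simp [hi], hA.2.1⟩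

lemma Lx_pre (n k t r : ℕ) (A : Finset ℕ) (hA : A ∈ Lx n k t r) : Icc 1 (t - 1) ⊆ A :=
  (mem_filter.1 hA).2.1

lemma dg_full (G : Finset (Finset ℕ)) (x : ℕ) (h : ∀ A ∈ G, x ∈ A) : dg G x = G.card := by
  rw [dg_eq, filter_true_of_mem h]

lemma lexcmp (n k t r M m0 : ℕ) (ht : 2 ≤ t) (htk : t ≤ k) (hn : t + r ≤ n)
    (hM : M = (Lx n k t r).card + m0) (hm0 : m0 ≤ (n - (t + r)).choose (k - t)) :
    ∃ G ⊆ (Icc 1 n).powersetCard k, G.card = M ∧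
      ((t:ℝ) - 1) * (M:ℝ) ^ 2 + r * ((n - t).choose (k - t) : ℝ) ^ 2 + (m0:ℝ) ^ 2 ≤ totalInt G := by
  rw [← stE_card n k t (t + r) (by omega) htk (by omega) hn] at hm0
  obtain ⟨E, hE, hEc⟩ := exists_subset_card_eq hm0
  have hdis : Disjoint (Lx n k t r) E := (Lx_disj n k t r).mono_right hE
  have hGs : Lx n k t r ∪ E ⊆ (Icc 1 n).powersetCard k :=
    union_subset (filter_subset _ _) (hE.trans (filter_subset _ _))
  have hGc : (Lx n k t r ∪ E).card = M := by rw [card_union_of_disjoint hdis, hEc, hM]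
  refine ⟨Lx n k t r ∪ E, hGs, hGc, ?_⟩
  set G := Lx n k t r ∪ E with hG
  rw [totalInt_sq G (Icc 1 n) (fun A hA => (mem_powersetCard.1 (hGs hA)).1)]
  have hsplit : Icc 1 (t - 1) ∪ ((range r).map (addLeftEmbedding t)) ∪ {t + r} ⊆ Icc 1 n := by
    intro x hx
    simp only [mem_union, mem_map, mem_range, addLeftEmbedding_apply, mem_singleton, mem_Icc] at hx ⊢
    rcases hx with (h | ⟨a, h, rfl⟩) | rfl <;> omega
  refine le_trans ?_ (sum_le_sum_of_subset_of_nonneg hsplit (fun x _ _ => sq_nonneg _))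
  rw [sum_union, sum_union]
  · refine add_le_add (add_le_add ?_ ?_) ?_
    · rw [sum_congr rfl (g := fun _ => (M:ℝ)^2)]
      · rw [sum_const, nsmul_eq_mul]
        simp only [Nat.card_Icc]
        rw [Nat.sub_add_cancel (by omega), Nat.cast_sub (by omega)]
        simp
      · intro x hx
        rw [dg_full G x, hGc]
        intro A hA
        rcases mem_union.1 hA with h | h
        · exact Lx_pre n k t r A h hx
        · have := (mem_filter.1 (hE h)).2.1
          exact this (mem_insert_of_mem hx)
    · rw [sum_map]
      calc (r:ℝ) * ((n - t).choose (k - t) : ℝ) ^ 2 = ∑ i ∈ range r, ((n - t).choose (k - t) : ℝ) ^ 2 := by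
            simp
        _ ≤ _ := by
          refine sum_le_sum fun i hi => ?_
          have hi := mem_range.1 hi
          have := Lx_dg n k t r G subset_union_left i (by omega) htk hi (by omega)
          exact pow_le_pow_left₀ (by positivity) this 2
    · rw [sum_singleton]
      refine pow_le_pow_left₀ (by positivity) ?_ 2
      rw [dg_eq, ← hEc]
      norm_cast
      apply card_le_card
      intro A hA
      refine mem_filter.2 ⟨mem_union_right _ hA, ?_⟩
      exact (mem_filter.1 (hE hA)).2.1 (mem_insert_self _ _)
  · rw [disjoint_left]
    intro x hx
    simp only [mem_map, mem_range, addLeftEmbedding_apply, mem_Icc] at hx ⊢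
    rintro ⟨a, h, rfl⟩; omega
  · rw [disjoint_left]
    intro x hx
    simp only [mem_union, mem_map, mem_range, addLeftEmbedding_apply, mem_singleton, mem_Icc] at hx ⊢
    rcases hx with h | ⟨a, h, rfl⟩ <;> omega

lemma choose_drop (m j i : ℕ) (hi : i ≤ m) :
    m.choose (j + 1) ≤ (m - i).choose (j + 1) + i * (m - 1).choose j ∧
    (m - i).choose (j + 1) + i * (m - i).choose j ≤ m.choose (j + 1) := by
  induction i with
  | zero => simp
  | succ i ih =>
    obtain ⟨h1, h2⟩ := ih (by omega)
    obtain ⟨p, hp⟩ : ∃ p, m - i = p + 1 := ⟨m - i - 1, by omega⟩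
    have hp' : m - (i + 1) = p := by omega
    rw [hp, Nat.choose_succ_succ] at h1 h2
    rw [hp']
    have h3 : p.choose j ≤ (m - 1).choose j := Nat.choose_le_choose j (by omega)
    have h4 : p.choose j ≤ (p + 1).choose j := Nat.choose_le_choose j (by omega)
    constructor
    · simp only [Nat.succ_eq_add_one] at *; nlinarith
    · simp only [Nat.succ_eq_add_one] at *; nlinarith

lemma choose_ratio (m j : ℕ) (hm : 1 ≤ m) :
    m * (m - 1).choose j = m.choose (j + 1) * (j + 1) := by
  obtain ⟨p, rfl⟩ : ∃ p, m = p + 1 := ⟨m - 1, by omega⟩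
  simpa using Nat.add_one_mul_choose_eq p j

lemma choose_rel (m j i : ℕ) (hi : i ≤ m) :
    m * m.choose j ≤ m * (m - i).choose j + i * j * m.choose j := by
  rcases j with _ | j
  · simp
  · rcases Nat.eq_zero_or_pos m with rfl | hm
    · simp
    have h1 := (choose_drop m j i hi).1
    have h2 := choose_ratio m j hm
    calc m * m.choose (j+1) ≤ m * ((m - i).choose (j + 1) + i * (m - 1).choose j) :=
          Nat.mul_le_mul_left _ h1
      _ = m * (m - i).choose (j + 1) + i * (m * (m - 1).choose j) := by ring
      _ = _ := by rw [h2]; ring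


lemma secondF (n k t : ℕ) (F : Finset (Finset ℕ)) (hF : F ⊆ (Icc 1 n).powersetCard k)
    (htk : t < k) (T : Finset ℕ) (hT : T ∈ (Icc 1 n).powersetCard (t + 1))
    (hFT : ∀ A ∈ F, t ≤ (A ∩ T).card) (M N0 N' : ℝ) (hM : M = F.card)
    (hN0 : N0 = ((n - t - 1).choose (k - t) : ℝ)) (hN' : N' = ((n - t - 1).choose (k - t - 1) : ℝ))
    (hM0 : N0 ≤ 2 * M) :
    (totalInt F : ℝ) ≤ ((t:ℝ) - 1) * M ^ 2 + N0 * M + N' * (2 * M - N0) +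
      (t + 1) * N' * ((k - t) * M) := by
  have hsub : ∀ A ∈ F, A ⊆ Icc 1 n := fun A hA => (mem_powersetCard.1 (hF hA)).1
  have hAk : ∀ A ∈ F, A.card = k := fun A hA => (mem_powersetCard.1 (hF hA)).2
  obtain ⟨hTI, hTc⟩ := mem_powersetCard.1 hT
  set p : ℝ := ((F.filter fun A => T ⊆ A).card : ℝ) with hp
  have hM00 : 0 ≤ M := by rw [hM]; positivity
  have hN'0 : 0 ≤ N' := by rw [hN']; positivity
  have hp0 : 0 ≤ p := by positivity
  have hpN : p ≤ N' := by
    have := star_le n k F hF T hTI (by omega)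
    rw [hTc] at this
    rw [hp, hN', Nat.sub_sub, Nat.sub_sub]
    exact_mod_cast this
  have hsumT : ∑ x ∈ T, dg F x = t * M + p := by
    rw [sum_dg_gen]
    have : ∀ A ∈ F, ((A ∩ T).card : ℝ) = t + if T ⊆ A then (1:ℝ) else 0 := by
      intro A hA
      split_ifs with h
      · rw [inter_eq_right.2 h, hTc]; push_cast; ring
      · have h1 := hFT A hA
        have h2 : (A ∩ T).card < T.card := by
          refine card_lt_card ⟨inter_subset_right, fun h' => h (h'.trans inter_subset_left)⟩
        have : (A ∩ T).card = t := by omega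
        rw [this, add_zero]
    rw [sum_congr rfl this, sum_add_distrib, sum_const, nsmul_eq_mul, sum_boole, hM]
    ring
  have hmx : ∀ x ∈ T, M - dg F x ≤ N0 := by
    intro x hx
    have h1 : (F.filter (fun A => x ∈ A)).card + (F.filter (fun A => ¬ x ∈ A)).card = F.card :=
      card_filter_add_card_filter_not _
    have h2 : (F.filter (fun A => ¬ x ∈ A)).card ≤ (n - t - 1).choose (k - t) := by
      have h3 := star_card n k (T.erase x) {x} ((erase_subset _ _).trans hTI)
        (by simpa using hTI hx) (by simp) (by rw [card_erase_of_mem hx]; omega)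
      rw [card_erase_of_mem hx, hTc] at h3
      simp only [card_singleton, Nat.add_sub_cancel] at h3
      rw [← h3]
      apply card_le_card
      intro A hA
      obtain ⟨hA, hxA⟩ := mem_filter.1 hA
      refine mem_filter.2 ⟨hF hA, ?_, by simpa using hxA⟩
      have h4 : A ∩ T ⊆ T.erase x := by
        intro y hy
        have := mem_inter.1 hy
        exact mem_erase.2 ⟨fun h => hxA (h ▸ this.1), this.2⟩
      have h5 := eq_of_subset_of_card_le h4 (by
        rw [card_erase_of_mem hx, hTc]; simpa using hFT A hA)
      rw [← h5]; exact inter_subset_left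
    rw [dg_eq, hM, hN0, ← h1]
    push_cast
    have : ((F.filter (fun A => ¬ x ∈ A)).card : ℝ) ≤ ((n - t - 1).choose (k - t) : ℝ) := by
      exact_mod_cast h2
    linarith
  have hmain : ∑ x ∈ T, dg F x ^ 2 ≤ ((t:ℝ) - 1) * M ^ 2 + N0 * M + p * (2 * M - N0) := by
    calc ∑ x ∈ T, dg F x ^ 2 ≤ ∑ x ∈ T, ((N0 * M - M ^ 2) + (2 * M - N0) * dg F x) := by
          refine sum_le_sum fun x hx => ?_
          have h1 := hmx x hx
          have h2 : 0 ≤ M - dg F x := by rw [hM]; linarith [dg_le F x]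
          nlinarith [mul_nonneg h2 (sub_nonneg.2 h1)]
      _ = (t + 1) * (N0 * M - M ^ 2) + (2 * M - N0) * (t * M + p) := by
          rw [sum_add_distrib, sum_const, nsmul_eq_mul, ← mul_sum, hsumT, hTc]; push_cast; ring
      _ = _ := by ring
  have hlight : ∀ x ∈ Icc 1 n \ T, dg F x ≤ (t + 1) * N' := by
    intro x hx
    obtain ⟨hxI, hxT⟩ := mem_sdiff.1 hx
    have h1 : F.filter (fun A => x ∈ A) ⊆ T.biUnion (fun y => F.filter (fun A => insert x (T.erase y) ⊆ A)) := by
      intro A hA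
      obtain ⟨hA, hxA⟩ := mem_filter.1 hA
      obtain ⟨Y, hY, hYc⟩ := exists_subset_card_eq (hFT A hA)
      have hYT : Y ⊆ T := hY.trans inter_subset_right
      obtain ⟨y, hyT, hyY⟩ := exists_mem_notMem_of_card_lt_card (show Y.card < T.card by omega)
      have h4 : Y ⊆ T.erase y := fun z hz => mem_erase.2 ⟨fun h => hyY (h ▸ hz), hYT hz⟩
      have h5 := eq_of_subset_of_card_le h4 (by rw [card_erase_of_mem hyT]; omega)
      refine mem_biUnion.2 ⟨y, hyT, mem_filter.2 ⟨hA, insert_subset hxA ?_⟩⟩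
      rw [← h5]; exact hY.trans inter_subset_left
    have h2 : (F.filter (fun A => x ∈ A)).card ≤ ∑ y ∈ T, (n - t - 1).choose (k - t - 1) := by
      refine (card_le_card h1).trans (card_biUnion_le.trans (sum_le_sum fun y hy => ?_))
      have hc : (insert x (T.erase y)).card = t + 1 := by
        rw [card_insert_of_notMem (fun h => hxT (mem_of_mem_erase h)), card_erase_of_mem hy]; omega
      have := star_le n k F hF (insert x (T.erase y))
        (insert_subset hxI ((erase_subset _ _).trans hTI)) (by omega)
      rwa [hc, ← Nat.sub_sub, ← Nat.sub_sub] at this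
    rw [sum_const, smul_eq_mul, hTc] at h2
    rw [dg_eq, hN']
    exact_mod_cast h2
  have hsumR : ∑ x ∈ Icc 1 n \ T, dg F x ≤ (k - t) * M := by
    have h1 := sum_sdiff (f := dg F) hTI
    have h2 : ∑ x ∈ Icc 1 n, dg F x = k * M := by
      rw [sum_dg_gen, sum_congr rfl (g := fun _ => (k:ℝ))]
      · rw [sum_const, nsmul_eq_mul, hM]; ring
      · intro A hA
        rw [inter_eq_left.2 (hsub A hA), hAk A hA]
    linarith
  have hR : ∑ x ∈ Icc 1 n \ T, dg F x ^ 2 ≤ (t + 1) * N' * ((k - t) * M) := by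
    calc ∑ x ∈ Icc 1 n \ T, dg F x ^ 2 ≤ ∑ x ∈ Icc 1 n \ T, (t + 1) * N' * dg F x := by
          refine sum_le_sum fun x hx => ?_
          rw [sq]
          exact mul_le_mul_of_nonneg_right (hlight x hx) (dg_nonneg F x)
      _ = (t + 1) * N' * ∑ x ∈ Icc 1 n \ T, dg F x := by rw [mul_sum]
      _ ≤ _ := mul_le_mul_of_nonneg_left hsumR (by positivity)
  rw [totalInt_sq F (Icc 1 n) hsub, ← sum_sdiff hTI]
  have : p * (2 * M - N0) ≤ N' * (2 * M - N0) :=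
    mul_le_mul_of_nonneg_right hpN (by linarith)
  linarith

lemma secondL (n k t : ℕ) (ht : 2 ≤ t) (htk : t < k) (hn : 2 * t ≤ n) (M N : ℝ)
    (hM : M = (Lx n k t (t + 1)).card) (hN : N = ((n - t).choose (k - t) : ℝ)) :
    ((t:ℝ) - 1) * M ^ 2 + (t + 1) * N ^ 2 + (k * M - (t - 1) * M - (t + 1) * N) ^ 2 / n ≤
      totalInt (Lx n k t (t + 1)) := by
  set L := Lx n k t (t + 1) with hL
  have hLs : L ⊆ (Icc 1 n).powersetCard k := filter_subset _ _
  have hsub : ∀ A ∈ L, A ⊆ Icc 1 n := fun A hA => (mem_powersetCard.1 (hLs hA)).1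
  have hAk : ∀ A ∈ L, A.card = k := fun A hA => (mem_powersetCard.1 (hLs hA)).2
  have h2 : ∑ x ∈ Icc 1 n, dg L x = k * M := by
    rw [sum_dg_gen, sum_congr rfl (g := fun _ => (k:ℝ))]
    · rw [sum_const, nsmul_eq_mul, hM]; ring
    · intro A hA
      rw [inter_eq_left.2 (hsub A hA), hAk A hA]
  set S1 := Icc 1 (t - 1)
  set S2 := (range (t + 1)).map (addLeftEmbedding t)
  have hdis : Disjoint S1 S2 := by
    rw [disjoint_left]
    intro x hx
    simp only [S1, S2, mem_map, mem_range, addLeftEmbedding_apply, mem_Icc] at hx ⊢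
    rintro ⟨a, h, rfl⟩; omega
  have hS : S1 ∪ S2 ⊆ Icc 1 n := by
    intro x hx
    simp only [S1, S2, mem_union, mem_map, mem_range, addLeftEmbedding_apply, mem_Icc] at hx ⊢
    rcases hx with h | ⟨a, h, rfl⟩ <;> omega
  have hd1 : ∀ x ∈ S1, dg L x = M := by
    intro x hx
    rw [dg_full L x, hM]
    intro A hA
    exact Lx_pre n k t _ A hA hx
  have hd2 : ∀ x ∈ S2, dg L x = N := by
    intro x hx
    obtain ⟨i, hi, rfl⟩ := mem_map.1 hx
    have hi := mem_range.1 hi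
    simp only [addLeftEmbedding_apply]
    refine le_antisymm ?_ (hN ▸ Lx_dg n k t (t+1) L subset_rfl i (by omega) (by omega) hi (by omega))
    have hc := core_card t (t + i) (by omega) (by omega)
    have := star_le n k L hLs (insert (t + i) (Icc 1 (t - 1)))
      (core_sub n t _ (by omega) (by omega) (by omega)) (by omega)
    rw [hc] at this
    rw [dg_eq, hN]
    refine le_trans ?_ (Nat.cast_le.2 this)
    norm_cast
    apply card_le_card
    intro A hA
    obtain ⟨hA, hx⟩ := mem_filter.1 hA
    exact mem_filter.2 ⟨hA, insert_subset hx (Lx_pre n k t _ A hA)⟩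
  have hc1 : (S1.card : ℝ) = t - 1 := by
    simp only [S1, Nat.card_Icc]
    rw [Nat.sub_add_cancel (by omega), Nat.cast_sub (by omega)]
    simp
  have hc2 : (S2.card : ℝ) = t + 1 := by simp [S2]
  have hsumS : ∑ x ∈ S1 ∪ S2, dg L x = (t - 1) * M + (t + 1) * N := by
    rw [sum_union hdis, sum_congr rfl hd1, sum_congr rfl hd2, sum_const, sum_const, nsmul_eq_mul,
      nsmul_eq_mul, hc1, hc2]
  have hsumS2 : ∑ x ∈ S1 ∪ S2, dg L x ^ 2 = (t - 1) * M ^ 2 + (t + 1) * N ^ 2 := by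
    rw [sum_union hdis, sum_congr rfl (fun x hx => by rw [hd1 x hx]),
      sum_congr rfl (fun x (hx : x ∈ S2) => by rw [hd2 x hx]), sum_const, sum_const, nsmul_eq_mul,
      nsmul_eq_mul, hc1, hc2]
  rw [totalInt_sq L (Icc 1 n) hsub, ← sum_sdiff hS, hsumS2]
  have h3 := sum_sdiff (f := dg L) hS
  have h4 : ∑ x ∈ Icc 1 n \ (S1 ∪ S2), dg L x = k * M - (t - 1) * M - (t + 1) * N := by linarith
  have h5 := sq_sum_le_card_mul_sum_sq (s := Icc 1 n \ (S1 ∪ S2)) (f := dg L)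
  rw [h4] at h5
  have h6 : ((Icc 1 n \ (S1 ∪ S2)).card : ℝ) ≤ n := by
    have := card_le_card (sdiff_subset : Icc 1 n \ (S1 ∪ S2) ⊆ Icc 1 n)
    simp only [Nat.card_Icc, Nat.add_sub_cancel] at this
    exact_mod_cast this
  have h7 : 0 ≤ ∑ x ∈ Icc 1 n \ (S1 ∪ S2), dg L x ^ 2 := sum_nonneg fun x _ => sq_nonneg _
  have hn0 : (0:ℝ) < n := by
    have : 0 < n := by omega
    exact_mod_cast this
  have h8 : (k * M - (t - 1) * M - (t + 1) * N) ^ 2 / n ≤ ∑ x ∈ Icc 1 n \ (S1 ∪ S2), dg L x ^ 2 := by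
    rw [div_le_iff₀ hn0]
    nlinarith
  linarith


set_option maxHeartbeats 1000000 in
lemma second_num (t s ν N N' N0 M e τ : ℝ) (ht : 2 ≤ t) (hs : 1 ≤ s) (hν : 100 * s ^ 2 * t ^ 4 ≤ ν)
    (hN : 0 < N) (hNN : N = N0 + N') (hN' : N' * ν = N * s) (hM : M = (t + 1) * N - e)
    (hτ : τ = t * (t + 1) / 2)
    (he1 : τ * N' * (ν - t * s) ≤ e * ν) (he2 : e ≤ τ * N') (he0 : 0 ≤ e) (hM0 : 0 ≤ M) :
    N0 * M + N' * (2 * M - N0) + (t + 1) * N' * (s * M) < (t + 1) * N ^ 2 + (s * M - e) ^ 2 / (ν + t) := by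
  have hνp : 0 < ν := lt_of_lt_of_le (by positivity) hν
  obtain ⟨u, hu⟩ : ∃ u, u = s / ν := ⟨_, rfl⟩
  have hup : 0 < u := by rw [hu]; positivity
  have huν : u * ν = s := by rw [hu]; field_simp
  have hN'u : N' = u * N := by
    have : N' * ν = (u * N) * ν := by rw [hN', mul_right_comm, huν]; ring
    exact mul_right_cancel₀ hνp.ne' this
  have hN'p : 0 < N' := by rw [hN'u]; positivity
  have hNNp : 0 < N * N' := by positivity
  have hτp : 0 < τ := by rw [hτ]; positivity
  have he1' : τ * N' * (1 - t * u) ≤ e := by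
    have : (τ * N' * (1 - t * u)) * ν ≤ e * ν := by
      calc (τ * N' * (1 - t * u)) * ν = τ * N' * (ν - t * (u * ν)) := by ring
        _ = τ * N' * (ν - t * s) := by rw [huν]
        _ ≤ _ := he1
    exact le_of_mul_le_mul_right this hνp
  have hτt : 1 ≤ τ - t := by rw [hτ]; nlinarith
  -- main part
  have h1 : (t + 1) * N ^ 2 - N0 * M - N' * (2 * M - N0) = (N + N') * e - t * (N * N') - N' ^ 2 := by
    have : N0 = N - N' := by linarith
    rw [this, hM]; ring
  have h2 : (N * N') * (1 - (τ * t + 1) * u) ≤ (N + N') * e - t * (N * N') - N' ^ 2 := by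
    have a1 : N * (τ * N' * (1 - t * u)) ≤ N * e := mul_le_mul_of_nonneg_left he1' hN.le
    have a2 : 0 ≤ N' * e := by positivity
    have a3 : N' ^ 2 = u * (N * N') := by rw [hN'u]; ring
    have a4 : 1 * (N * N') ≤ (τ - t) * (N * N') := mul_le_mul_of_nonneg_right hτt hNNp.le
    rw [a3]
    linarith
  -- light part
  have h3 : s * u * M ^ 2 - u ^ 2 * t * M ^ 2 - 2 * u * M * e ≤ (s * M - e) ^ 2 / (ν + t) := by
    rw [le_div_iff₀ (by linarith)]
    have b1 : (s * u * M ^ 2 - u ^ 2 * t * M ^ 2 - 2 * u * M * e) * (ν + t) =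
        s ^ 2 * M ^ 2 - 2 * s * M * e - u ^ 2 * t ^ 2 * M ^ 2 - 2 * u * t * (M * e) := by
      rw [← huν]; ring
    rw [b1]
    have : 0 ≤ M * e := by positivity
    have : 0 ≤ u * t * (M * e) := by positivity
    have : 0 ≤ u ^ 2 * t ^ 2 * M ^ 2 := by positivity
    nlinarith [sq_nonneg e]
  have hMle : M ≤ (t + 1) * N := by linarith
  have hMe : M * e ≤ (t + 1) * τ * (N * N') := by
    calc M * e ≤ ((t + 1) * N) * (τ * N') := by gcongr
      _ = _ := by ring
  have h4 : (t + 1) * N' * (s * M) = s * u * M ^ 2 + s * u * (M * e) := by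
    rw [hN'u]
    have : (t + 1) * N = M + e := by linarith
    calc (t + 1) * (u * N) * (s * M) = s * u * M * ((t + 1) * N) := by ring
      _ = _ := by rw [this]; ring
  have h5 : u ^ 2 * t * M ^ 2 ≤ u * t * (t + 1) ^ 2 * (N * N') := by
    calc u ^ 2 * t * M ^ 2 ≤ u ^ 2 * t * ((t + 1) * N) ^ 2 := by gcongr
      _ = u * t * (t + 1) ^ 2 * (N * (u * N)) := by ring
      _ = _ := by rw [← hN'u]
  have h6 : (s + 2) * u * (M * e) ≤ (s + 2) * u * ((t + 1) * τ * (N * N')) := by gcongr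
  have h7 : u * ((τ * t + 1) + (s + 2) * (t + 1) * τ + t * (t + 1) ^ 2) < 1 := by
    rw [hu, div_mul_eq_mul_div, div_lt_one hνp]
    refine lt_of_lt_of_le ?_ hν
    have c1 : τ ≤ t ^ 2 := by rw [hτ]; nlinarith
    have c2 : t + 1 ≤ 2 * t := by linarith
    have c3 : τ * t + 1 + (s + 2) * (t + 1) * τ + t * (t + 1) ^ 2 ≤
        t ^ 2 * t + 1 + (3 * s) * (2 * t) * t ^ 2 + t * (2 * t) ^ 2 := by
      gcongr; linarith
    have c4 : t ^ 2 * t + 1 + (3 * s) * (2 * t) * t ^ 2 + t * (2 * t) ^ 2 < 100 * s * t ^ 4 := by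
      have e1 : 8 ≤ t ^ 3 := by
        calc (8:ℝ) = 2 ^ 3 := by norm_num
          _ ≤ t ^ 3 := by gcongr
      have e2 : t ^ 3 ≤ s * t ^ 3 := le_mul_of_one_le_left (by linarith) hs
      have e3 : s * t ^ 3 * 2 ≤ s * t ^ 3 * t := mul_le_mul_of_nonneg_left ht (by linarith)
      linarith
    calc s * (τ * t + 1 + (s + 2) * (t + 1) * τ + t * (t + 1) ^ 2) < s * (100 * s * t ^ 4) := by
          gcongr; linarith
      _ = _ := by ring
  have h8 := mul_lt_mul_of_pos_right h7 hNNp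
  linarith

set_option maxHeartbeats 1000000 in
lemma second (n k t : ℕ) (ht : 2 ≤ t) (htk : t < k) (hn : 100 * k ^ 2 * t ^ 4 + t ≤ n)
    (F : Finset (Finset ℕ)) (hF : F ⊆ (Icc 1 n).powersetCard k)
    (T : Finset ℕ) (hT : T ∈ (Icc 1 n).powersetCard (t + 1))
    (hFT : ∀ A ∈ F, t ≤ (A ∩ T).card) (hc : F.card = (Lx n k t (t + 1)).card) :
    (totalInt F : ℝ) < totalInt (Lx n k t (t + 1)) := by
  have hbig : 100 * k * t ≤ 100 * k ^ 2 * t ^ 4 := by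
    calc 100 * k * t = 100 * k ^ 1 * t ^ 1 := by ring
      _ ≤ _ := by
        have : 0 < k := by omega
        have : 0 < t := by omega
        gcongr <;> omega
  have hkn : k ≤ 100 * k * t := by nlinarith
  have htn : t ≤ 100 * k * t := by nlinarith
  have hn2 : 2 * t + k ≤ n := by nlinarith
  obtain ⟨j, hj⟩ : ∃ j, k - t = j + 1 := ⟨k - t - 1, by omega⟩
  obtain ⟨v, hv⟩ : ∃ v, n - t = v + 1 := ⟨n - t - 1, by omega⟩
  have hcard := Lx_card n k t (t + 1) (by omega) (by omega) (by omega)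
  have htr : (2:ℝ) ≤ t := by exact_mod_cast ht
  set M : ℝ := ((Lx n k t (t + 1)).card : ℝ) with hM
  have hMF : M = (F.card : ℝ) := by rw [hc]
  have hcR : M = ∑ i ∈ range (t + 1), ((n - (t + i)).choose (k - t) : ℝ) := by
    rw [hM, hcard]; push_cast; rfl
  obtain ⟨N, hN⟩ : ∃ N : ℝ, N = ((n - t).choose (k - t) : ℝ) := ⟨_, rfl⟩
  obtain ⟨N0, hN0⟩ : ∃ N0 : ℝ, N0 = ((n - t - 1).choose (k - t) : ℝ) := ⟨_, rfl⟩
  obtain ⟨N', hN'⟩ : ∃ N' : ℝ, N' = ((n - t - 1).choose (k - t - 1) : ℝ) := ⟨_, rfl⟩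
  have hNN : N = N0 + N' := by
    rw [hN, hN0, hN', hv, hj]
    simp only [Nat.add_sub_cancel]
    rw [Nat.choose_succ_succ]; push_cast; ring
  have hNp : 0 < N := by
    rw [hN]; exact_mod_cast Nat.choose_pos (by omega)
  have hN'p : 0 ≤ N' := by rw [hN']; positivity
  have hN0p : 0 ≤ N0 := by rw [hN0]; positivity
  have hsR : ((k - t : ℕ) : ℝ) = (k:ℝ) - t := by rw [Nat.cast_sub htk.le]
  have hνR : ((n - t : ℕ) : ℝ) = (n:ℝ) - t := by rw [Nat.cast_sub (by omega)]
  have hrat : N' * ((n:ℝ) - t) = N * ((k:ℝ) - t) := by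
    have := choose_ratio (n - t) j (by omega)
    rw [← hj] at this
    have h2 : (((n - t : ℕ) : ℝ)) * ((n - t - 1).choose j : ℝ) = ((n - t).choose (k - t) : ℝ) * ((k - t : ℕ) : ℝ) := by
      exact_mod_cast this
    rw [hN', hN, ← hsR, ← hνR, ← h2]
    rw [show k - t - 1 = j by omega]; ring
  -- M bounds
  obtain ⟨N2, hN2⟩ : ∃ N2 : ℝ, N2 = ((n - t - 1 - t).choose (k - t - 1) : ℝ) := ⟨_, rfl⟩
  obtain ⟨τ, hτ⟩ : ∃ τ : ℝ, τ = (t:ℝ) * (t + 1) / 2 := ⟨_, rfl⟩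
  have hsumi : ∑ i ∈ range (t + 1), (i:ℝ) = τ := by
    have h := sum_range_id_mul_two (t + 1)
    have h' : (∑ i ∈ range (t + 1), (i:ℝ)) * 2 = (t + 1) * t := by
      have : (((∑ i ∈ range (t + 1), i) * 2 : ℕ) : ℝ) = (((t + 1) * (t + 1 - 1) : ℕ) : ℝ) := by rw [h]
      push_cast at this
      simpa using this
    rw [hτ]; linarith
  have hup : M ≤ (t + 1) * N - τ * N2 := by
    calc M ≤ ∑ i ∈ range (t + 1), (N - i * N2) := by
          rw [hcR]
          refine sum_le_sum fun i hi => ?_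
          have hi := mem_range.1 hi
          have h1 := (choose_drop (n - t) j i (by omega)).2
          have h2 : (n - t - 1 - t).choose j ≤ (n - t - i).choose j := Nat.choose_le_choose j (by omega)
          rw [← hj, Nat.sub_sub n t i] at h1
          have h3 : (n - (t + i)).choose (k - t) + i * (n - t - 1 - t).choose j ≤ (n - t).choose (k - t) := by
            rw [Nat.sub_sub n t i] at h2
            nlinarith
          have h4 : ((n - (t + i)).choose (k - t) : ℝ) + i * ((n - t - 1 - t).choose j : ℝ) ≤ ((n - t).choose (k - t) : ℝ) := by
            exact_mod_cast h3
          rw [hN, hN2, show k - t - 1 = j by omega]; linarith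
      _ = _ := by
        rw [sum_sub_distrib, sum_const, nsmul_eq_mul, ← sum_mul, hsumi, card_range]; push_cast; ring
  have hlow : (t + 1) * N - τ * N' ≤ M := by
    calc (t + 1) * N - τ * N' = ∑ i ∈ range (t + 1), (N - i * N') := by
          rw [sum_sub_distrib, sum_const, nsmul_eq_mul, ← sum_mul, hsumi, card_range]; push_cast; ring
      _ ≤ M := by
          rw [hcR]
          refine sum_le_sum fun i hi => ?_
          have hi := mem_range.1 hi
          have h1 := (choose_drop (n - t) j i (by omega)).1
          rw [← hj, Nat.sub_sub n t i] at h1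
          have h4 : ((n - t).choose (k - t) : ℝ) ≤ ((n - (t + i)).choose (k - t) : ℝ) + i * ((n - t - 1).choose j : ℝ) := by
            exact_mod_cast h1
          rw [hN, hN', show k - t - 1 = j by omega]; linarith
  have hN2low : N' * ((n:ℝ) - t - t * ((k:ℝ) - t)) ≤ N2 * ((n:ℝ) - t) := by
    have h1 := choose_rel (n - t - 1) j t (by omega)
    have h2 : (((n - t - 1 : ℕ)):ℝ) * N' ≤ ((n - t - 1 : ℕ):ℝ) * N2 + t * j * N' := by
      rw [hN', hN2, show k - t - 1 = j by omega]
      exact_mod_cast h1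
    have hjR : (j:ℝ) = (k:ℝ) - t - 1 := by
      rw [← hsR, hj]; push_cast; ring
    have hvR : ((n - t - 1 : ℕ):ℝ) = (n:ℝ) - t - 1 := by
      rw [Nat.cast_sub (by omega), hνR]; simp
    rw [hjR, hvR] at h2
    have hk0 : 0 ≤ N2 := by rw [hN2]; positivity
    have hle : N2 ≤ N' := by
      rw [hN', hN2]
      exact_mod_cast Nat.choose_le_choose _ (by omega)
    nlinarith
  have hτ0 : 0 ≤ τ := by rw [hτ]; positivity
  have hs1 : (1:ℝ) ≤ (k:ℝ) - t := by
    rw [← hsR]; exact_mod_cast (by omega : 1 ≤ k - t)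
  have hνbig : 100 * ((k:ℝ) - t) ^ 2 * (t:ℝ) ^ 4 ≤ (n:ℝ) - t := by
    have h1 : 100 * (k:ℝ) ^ 2 * (t:ℝ) ^ 4 + t ≤ n := by exact_mod_cast hn
    have h2 : ((k:ℝ) - t) ^ 2 ≤ (k:ℝ) ^ 2 := by
      apply pow_le_pow_left₀ (by linarith); linarith
    have h3 : 100 * ((k:ℝ) - t) ^ 2 * (t:ℝ) ^ 4 ≤ 100 * (k:ℝ) ^ 2 * (t:ℝ) ^ 4 := by gcongr
    linarith
  have hνpos : 0 < (n:ℝ) - t := lt_of_lt_of_le (by positivity) hνbig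
  have hN2p : 0 ≤ N2 := by rw [hN2]; positivity
  have hM0 : 0 ≤ M := by positivity
  have hNM : N ≤ M := by
    rw [hcR, hN]
    have := single_le_sum (s := range (t + 1)) (f := fun i => ((n - (t + i)).choose (k - t) : ℝ))
      (fun i _ => by positivity) (mem_range.2 (Nat.succ_pos t))
    simpa using this
  have hfin := second_num t ((k:ℝ) - t) ((n:ℝ) - t) N N' N0 M ((t + 1) * N - M) τ htr hs1 hνbig hNp hNN
    hrat (by ring) hτ (by
      have h1 : τ * (N' * ((n:ℝ) - t - t * ((k:ℝ) - t))) ≤ τ * (N2 * ((n:ℝ) - t)) :=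
        mul_le_mul_of_nonneg_left hN2low hτ0
      have h2 : (τ * N2) * ((n:ℝ) - t) ≤ ((t + 1) * N - M) * ((n:ℝ) - t) :=
        mul_le_mul_of_nonneg_right (by linarith) hνpos.le
      linarith) (by linarith) (by
        have := mul_nonneg hτ0 hN2p
        linarith) hM0
  have hA := secondF n k t F hF htk T hT hFT M N0 N' hMF hN0 hN' (by linarith)
  have hB := secondL n k t ht htk (by omega) M N hM hN
  have hE : ((k:ℝ) - t) * M - ((t + 1) * N - M) = k * M - (t - 1) * M - (t + 1) * N := by ring
  rw [hE, sub_add_cancel] at hfin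
  linarith


lemma atyp (n k t : ℕ) (F : Finset (Finset ℕ)) (hF : F ⊆ (Icc 1 n).powersetCard k) (htk : t < k)
    (H : Finset ℕ) (hH : H ⊆ Icc 1 n) :
    (F.filter fun A => t < (A ∩ H).card).card ≤ H.card ^ (t + 1) * (n - t - 1).choose (k - t - 1) := by
  have h1 : (F.filter fun A => t < (A ∩ H).card) ⊆
      (H.powersetCard (t + 1)).biUnion (fun S => F.filter fun A => S ⊆ A) := by
    intro A hA
    obtain ⟨hA, h⟩ := mem_filter.1 hA
    obtain ⟨S, hS, hSc⟩ := exists_subset_card_eq (show t + 1 ≤ (A ∩ H).card from h)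
    exact mem_biUnion.2 ⟨S, mem_powersetCard.2 ⟨hS.trans inter_subset_right, hSc⟩,
      mem_filter.2 ⟨hA, hS.trans inter_subset_left⟩⟩
  refine (card_le_card h1).trans (card_biUnion_le.trans ?_)
  calc ∑ S ∈ H.powersetCard (t + 1), (F.filter fun A => S ⊆ A).card
      ≤ ∑ S ∈ H.powersetCard (t + 1), (n - t - 1).choose (k - t - 1) := by
        refine sum_le_sum fun S hS => ?_
        obtain ⟨h1, h2⟩ := mem_powersetCard.1 hS
        have := star_le n k F hF S (h1.trans hH) (by omega)
        rwa [h2, ← Nat.sub_sub, ← Nat.sub_sub] at this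
    _ = H.card.choose (t + 1) * (n - t - 1).choose (k - t - 1) := by
        rw [sum_const, card_powersetCard, smul_eq_mul]
    _ ≤ _ := Nat.mul_le_mul_right _ (Nat.choose_le_pow _ _)

lemma U_card (n k t : ℕ) (F : Finset (Finset ℕ)) (hF : F ⊆ (Icc 1 n).powersetCard k) (htk : t < k)
    (T : Finset ℕ) (hT : T ∈ (Icc 1 n).powersetCard (t + 1))
    (hFT : ∀ A ∈ F, t ≤ (A ∩ T).card) : F.card ≤ (t + 1) * (n - t).choose (k - t) := by
  obtain ⟨hTI, hTc⟩ := mem_powersetCard.1 hT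
  have h1 : F ⊆ (T.powersetCard t).biUnion (fun S => F.filter fun A => S ⊆ A) := by
    intro A hA
    obtain ⟨S, hS, hSc⟩ := exists_subset_card_eq (hFT A hA)
    exact mem_biUnion.2 ⟨S, mem_powersetCard.2 ⟨hS.trans inter_subset_right, hSc⟩,
      mem_filter.2 ⟨hA, hS.trans inter_subset_left⟩⟩
  refine (card_le_card h1).trans (card_biUnion_le.trans ?_)
  calc ∑ S ∈ T.powersetCard t, (F.filter fun A => S ⊆ A).card
      ≤ ∑ S ∈ T.powersetCard t, (n - t).choose (k - t) := by
        refine sum_le_sum fun S hS => ?_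
        obtain ⟨h1, h2⟩ := mem_powersetCard.1 hS
        have := star_le n k F hF S (h1.trans hTI) (by omega)
        rwa [h2] at this
    _ = _ := by
        rw [sum_const, card_powersetCard, smul_eq_mul, hTc, Nat.choose_succ_self_right]

lemma C1_eq (k t r : ℕ) : Cconst k t r 1 = 10 ^ 6 * (k ^ 2 * t ^ 4 * (r + 1) ^ 7) := by
  simp [Cconst]

lemma Ct_ge (k t r : ℕ) (hk : 2 ≤ k) (ht : 2 ≤ t) : Cconst k t r 1 ^ 2 ≤ Cconst k t r t := by
  rw [C1_eq]
  set B := k ^ 2 * t ^ 4 * (r + 1) ^ 7 with hB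
  have hB1 : 1 ≤ B := by
    have : 0 < B := by positivity
    exact this
  unfold Cconst
  rw [← hB]
  have h1 : 2 ^ 1 ≤ 2 ^ (t - 1) := Nat.pow_le_pow_right (by norm_num) (by omega)
  have h2 : 2 ^ 4 ≤ 2 ^ (t + 2) := Nat.pow_le_pow_right (by norm_num) (by omega)
  calc (10 ^ 6 * B) ^ 2 = 1 * 10 ^ 12 * B ^ 2 := by ring
    _ ≤ _ := by
      gcongr
      · exact Nat.one_le_two_pow
      · norm_num
      · omega
      · exact h1

lemma nbound (k r t n : ℕ) (hk : 2 ≤ k) (ht : 2 ≤ t)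
    (hn : Cconst k t r 1 * (3 * t * Cconst k t r t) ^ (2 * t) ≤ n) :
    Cconst k t r 1 ^ (2 * t + 5) + t ≤ n := by
  have hC := Ct_ge k t r hk ht
  have hX1 : 1 ≤ Cconst k t r 1 := by
    rw [C1_eq]
    have : 0 < 10 ^ 6 * (k ^ 2 * t ^ 4 * (r + 1) ^ 7) := by positivity
    exact this
  set X := Cconst k t r 1
  have h1 : X * (3 * t * X ^ 2) ^ (2 * t) ≤ n := by
    refine le_trans ?_ hn
    gcongr
  have h2 : X * (3 * t * X ^ 2) ^ (2 * t) = (3 * t) ^ (2 * t) * X ^ (4 * t + 1) := by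
    rw [mul_pow, ← pow_mul, pow_succ]; ring
  have h3 : X ^ (2 * t + 5) ≤ X ^ (4 * t + 1) := Nat.pow_le_pow_right hX1 (by omega)
  have h4 : 3 * t ≤ (3 * t) ^ (2 * t) := Nat.le_self_pow (by omega) _
  have h5 : 1 ≤ X ^ (4 * t + 1) := Nat.one_le_pow _ _ hX1
  rw [h2] at h1
  nlinarith

lemma c_bound (r δ η M N Nr m0 : ℝ) (hr : 0 ≤ r) (hδ0 : 0 ≤ δ) (hδ1 : δ ≤ 1) (hη : 0 ≤ η) (hη1 : η ≤ 1)
    (hM : 0 < M) (hN : 0 < N) (hMN : M ≤ (r + δ) * N) (hMδ : δ * N ≤ M) (hNr : (1 - η) * N ≤ Nr)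
    (hm : m0 = δ * Nr) :
    1 / (r + 1) + r * (1 - δ) ^ 2 / (r + 1) ^ 3 - 2 * η ≤ (r * N ^ 2 + m0 ^ 2) / M ^ 2 := by
  rw [le_div_iff₀ (by positivity), sub_mul]
  have h1 : (1 / (r + 1) + r * (1 - δ) ^ 2 / (r + 1) ^ 3) * M ^ 2 ≤ (r + δ ^ 2) * N ^ 2 := by
    have a1 : 1 / (r + 1) + r * (1 - δ) ^ 2 / (r + 1) ^ 3 =
        ((r + 1) ^ 2 + r * (1 - δ) ^ 2) / (r + 1) ^ 3 := by field_simp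
    have a2 : M ^ 2 ≤ ((r + δ) * N) ^ 2 := by gcongr
    have a3 : ((r + 1) ^ 2 + r * (1 - δ) ^ 2) * (r + δ) ^ 2 ≤ (r + δ ^ 2) * (r + 1) ^ 3 := by
      have b1 : (r + 1) * (r + δ ^ 2) = (r + δ) ^ 2 + r * (1 - δ) ^ 2 := by ring
      have b2 : (r + δ) ^ 2 ≤ (r + 1) ^ 2 := by gcongr
      have b3 : r * (1 - δ) ^ 2 * (r + δ) ^ 2 ≤ r * (1 - δ) ^ 2 * (r + 1) ^ 2 := by gcongr
      calc ((r + 1) ^ 2 + r * (1 - δ) ^ 2) * (r + δ) ^ 2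
          = (r + 1) ^ 2 * (r + δ) ^ 2 + r * (1 - δ) ^ 2 * (r + δ) ^ 2 := by ring
        _ ≤ (r + 1) ^ 2 * (r + δ) ^ 2 + r * (1 - δ) ^ 2 * (r + 1) ^ 2 := by linarith
        _ = (r + 1) ^ 2 * ((r + δ) ^ 2 + r * (1 - δ) ^ 2) := by ring
        _ = _ := by rw [← b1]; ring
    rw [a1, div_mul_eq_mul_div, div_le_iff₀ (by positivity)]
    calc ((r + 1) ^ 2 + r * (1 - δ) ^ 2) * M ^ 2 ≤ ((r + 1) ^ 2 + r * (1 - δ) ^ 2) * ((r + δ) * N) ^ 2 := by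
          gcongr
      _ = (((r + 1) ^ 2 + r * (1 - δ) ^ 2) * (r + δ) ^ 2) * N ^ 2 := by ring
      _ ≤ ((r + δ ^ 2) * (r + 1) ^ 3) * N ^ 2 := by gcongr
      _ = _ := by ring
  have h2 : (δ * N) ^ 2 ≤ M ^ 2 := by gcongr
  have h3 : ((1 - η) * N) ^ 2 ≤ Nr ^ 2 := by
    apply pow_le_pow_left₀ _ hNr
    exact mul_nonneg (by linarith) hN.le
  have h4 : (1 - 2 * η) * N ^ 2 ≤ Nr ^ 2 := by nlinarith [sq_nonneg (η * N)]
  have h5 : δ ^ 2 * ((1 - 2 * η) * N ^ 2) ≤ δ ^ 2 * Nr ^ 2 := by gcongr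
  have h6 : 2 * η * (δ * N) ^ 2 ≤ 2 * η * M ^ 2 := by gcongr
  rw [hm]
  nlinarith

lemma eta_facts (k t r η : ℝ) (hk : 3 ≤ k) (ht : 2 ≤ t) (hr : 0 ≤ r)
    (hη : η * (10 ^ 6 * (k ^ 2 * t ^ 4 * (r + 1) ^ 7)) = 1) :
    0 < η ∧ 10 ^ 7 * (η * (t ^ 2 * (r + 1) ^ 2)) ≤ 1 ∧
      (r = t → 10 ^ 9 * (η * (t * (t + 1) ^ 4)) ≤ 0.6) := by
  have h0 : 0 < η := by
    by_contra h
    have h1 : 0 ≤ 10 ^ 6 * (k ^ 2 * t ^ 4 * (r + 1) ^ 7) := by positivity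
    nlinarith
  have hk2 : 9 ≤ k ^ 2 := by nlinarith
  have ht2 : 4 ≤ t ^ 2 := by nlinarith
  refine ⟨h0, ?_, ?_⟩
  · have h1 : 1 ≤ (r + 1) ^ 5 := one_le_pow₀ (by linarith)
    have h2 : (36:ℝ) ≤ k ^ 2 * t ^ 2 * (r + 1) ^ 5 := by
      calc (36:ℝ) = 9 * 4 * 1 := by norm_num
        _ ≤ _ := by gcongr
    have h3 : 0 ≤ η * (t ^ 2 * (r + 1) ^ 2) := by positivity
    have h4 := mul_le_mul_of_nonneg_left h2 h3
    have h5 : η * (t ^ 2 * (r + 1) ^ 2) * (k ^ 2 * t ^ 2 * (r + 1) ^ 5) * 10 ^ 6 = 1 := by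
      linear_combination hη
    linarith
  · rintro rfl
    have h1 : (8:ℝ) ≤ r ^ 3 := by
      calc (8:ℝ) = 2 ^ 3 := by norm_num
        _ ≤ r ^ 3 := by gcongr
    have h1' : (27:ℝ) ≤ (r + 1) ^ 3 := by
      calc (27:ℝ) = 3 ^ 3 := by norm_num
        _ ≤ (r + 1) ^ 3 := by gcongr; linarith
    have h2 : (1944:ℝ) ≤ k ^ 2 * r ^ 3 * (r + 1) ^ 3 := by
      calc (1944:ℝ) = 9 * 8 * 27 := by norm_num
        _ ≤ _ := by gcongr
    have h3 : 0 ≤ η * (r * (r + 1) ^ 4) := by positivity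
    have h4 := mul_le_mul_of_nonneg_left h2 h3
    have h5 : η * (r * (r + 1) ^ 4) * (k ^ 2 * r ^ 3 * (r + 1) ^ 3) * 10 ^ 6 = 1 := by
      linear_combination hη
    linarith


set_option maxHeartbeats 1000000 in
lemma main_aux (k r t n X : ℕ) (hk : 2 ≤ k) (ht : 2 ≤ t)
    (hV : X ^ (2 * t + 5) + t ≤ n) (hXeq : X = 10 ^ 6 * (k ^ 2 * t ^ 4 * (r + 1) ^ 7))
    (δ : ℝ)
    (hδ : (60 * (k : ℝ) ^ 2 * ((r : ℝ) + 1) ^ 6 * (t : ℝ) ^ 4 / (X : ℝ) ≤ δ ∧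
           δ ≤ 1 - 60 * (k : ℝ) ^ 2 * ((r : ℝ) + 1) ^ 6 * (t : ℝ) ^ 4 / (X : ℝ)) ∨
          δ = 1)
    (F : Finset (Finset ℕ)) (hF : F ⊆ (Icc 1 n).powersetCard k)
    (hcard : (F.card : ℝ) =
      (∑ i ∈ Icc t (t + r - 1), ((n - i).choose (k - t) : ℝ)) +
        δ * ((n - (t + r)).choose (k - t) : ℝ))
    (hopt : ∀ G ⊆ (Icc 1 n).powersetCard k, G.card = F.card → totalInt G ≤ totalInt F)
    (hnostar : ¬ ∃ Y ∈ (Icc 1 n).powersetCard t, fullStar n k Y ⊆ F) :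
    ∃ x ∈ Icc 1 n, ∀ A ∈ F, x ∈ A := by
  have hX1 : 1 ≤ X := by
    rw [hXeq]
    have : 0 < 10 ^ 6 * (k ^ 2 * t ^ 4 * (r + 1) ^ 7) := by positivity
    exact this
  have hXp : X ≤ X ^ (2 * t + 5) := Nat.le_self_pow (by omega) _
  have hXr : (X:ℝ) = 10 ^ 6 * ((k:ℝ) ^ 2 * (t:ℝ) ^ 4 * ((r:ℝ) + 1) ^ 7) := by
    rw [hXeq]; push_cast; ring
  have hX0 : (0:ℝ) < X := by exact_mod_cast hX1
  have hk0 : (0:ℝ) < k := by exact_mod_cast (by omega : 0 < k)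
  have ht0 : (0:ℝ) < t := by exact_mod_cast (by omega : 0 < t)
  have hr0 : (0:ℝ) ≤ r := by positivity
  have hε : 60 * (k : ℝ) ^ 2 * ((r : ℝ) + 1) ^ 6 * (t : ℝ) ^ 4 / (X : ℝ) = 60 / (10 ^ 6 * ((r:ℝ) + 1)) := by
    rw [hXr]; field_simp
  rw [hε] at hδ
  have hεp : 0 < 60 / (10 ^ 6 * ((r:ℝ) + 1)) := by positivity
  have hε1 : 60 / (10 ^ 6 * ((r:ℝ) + 1)) ≤ 1 := by
    rw [div_le_one (by positivity)]; linarith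
  have hδε : 60 / (10 ^ 6 * ((r:ℝ) + 1)) ≤ δ := by
    rcases hδ with h | h
    · exact h.1
    · rw [h]; exact hε1
  have hδ1 : δ ≤ 1 := by
    rcases hδ with h | h
    · linarith [h.2]
    · exact h.le
  have hδ0 : 0 < δ := lt_of_lt_of_le hεp hδε
  have htn : t ≤ n := by omega
  -- the trivial cases
  rcases Nat.lt_or_ge t k with htk | htk
  swap
  · exfalso
    rcases Nat.lt_or_ge k t with hlt | hge
    · apply hnostar
      obtain ⟨Y, hY, hYc⟩ := exists_subset_card_eq (s := Icc 1 n) (n := t) (by simpa using htn)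
      refine ⟨Y, mem_powersetCard.2 ⟨hY, hYc⟩, ?_⟩
      intro A hA
      obtain ⟨hA1, hA2⟩ := mem_filter.1 hA
      have := card_le_card hA2
      rw [(mem_powersetCard.1 hA1).2] at this
      omega
    · have hkt : k = t := le_antisymm htk hge
      apply hnostar
      have hpos : (0:ℝ) < F.card := by
        rw [hcard, hkt]
        simp only [Nat.sub_self, Nat.choose_zero_right]
        positivity
      have hpos' : 0 < F.card := by exact_mod_cast hpos
      obtain ⟨A, hA⟩ := card_pos.1 hpos'
      refine ⟨A, hkt ▸ hF hA, ?_⟩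
      intro B hB
      obtain ⟨hB1, hB2⟩ := mem_filter.1 hB
      have := eq_of_subset_of_card_le hB2 (by
        rw [(mem_powersetCard.1 hB1).2, (mem_powersetCard.1 (hF hA)).2])
      rw [← this]; exact hA
  have hk3 : (3:ℝ) ≤ k := by exact_mod_cast (by omega : 3 ≤ k)
  have ht2 : (2:ℝ) ≤ t := by exact_mod_cast ht
  obtain ⟨η, hη⟩ : ∃ η : ℝ, η = 1 / X := ⟨_, rfl⟩
  have hηX : η * X = 1 := by rw [hη]; field_simp
  obtain ⟨hη0, hηa, hηb⟩ := eta_facts k t r η hk3 ht2 hr0 (by rw [← hXr]; exact hηX)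
  have hr1 : (1:ℝ) ≤ ((r:ℝ) + 1) ^ 2 := one_le_pow₀ (by linarith)
  have hηt : 10 ^ 7 * (η * t ^ 2) ≤ 1 := by
    have : η * t ^ 2 * 1 ≤ η * t ^ 2 * ((r:ℝ) + 1) ^ 2 :=
      mul_le_mul_of_nonneg_left hr1 (by positivity)
    linarith
  have hηs : 10 ^ 7 * η ≤ 1 := by
    have : η * 1 ≤ η * (t:ℝ) ^ 2 := mul_le_mul_of_nonneg_left (by nlinarith only [ht2]) hη0.le
    linarith
  -- size facts
  have hkX : k ^ 2 ≤ X := by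
    rw [hXeq]
    have h1 : 0 < 10 ^ 6 * (t ^ 4 * (r + 1) ^ 7) := by positivity
    calc k ^ 2 = k ^ 2 * 1 := by ring
      _ ≤ k ^ 2 * (10 ^ 6 * (t ^ 4 * (r + 1) ^ 7)) := Nat.mul_le_mul_left _ h1
      _ = _ := by ring
  have hrkX : r * k ≤ X := by
    rw [hXeq]
    have h1 : 0 < 10 ^ 6 * (k * t ^ 4 * (r + 1) ^ 6) := by positivity
    calc r * k ≤ ((r + 1) * k) * 1 := by rw [mul_one]; exact Nat.mul_le_mul_right _ (Nat.le_succ r)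
      _ ≤ ((r + 1) * k) * (10 ^ 6 * (k * t ^ 4 * (r + 1) ^ 6)) := Nat.mul_le_mul_left _ h1
      _ = _ := by ring
  have hX2 : X ^ 2 ≤ X ^ (2 * t + 5) := Nat.pow_le_pow_right hX1 (by omega)
  have hrle : r + k ≤ X ^ 2 := by
    have h1 : r ≤ r * k := Nat.le_mul_of_pos_right _ (by omega)
    have h2 : k * 2 ≤ k ^ 2 := by rw [sq]; exact Nat.mul_le_mul_left _ hk
    have h3 : 2 ≤ X := by omega
    have h4 : X * 2 ≤ X ^ 2 := by rw [sq]; exact Nat.mul_le_mul_left _ h3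
    omega
  have hntr : t + r + k ≤ n := by omega
  obtain ⟨N, hN⟩ : ∃ N : ℝ, N = ((n - t).choose (k - t) : ℝ) := ⟨_, rfl⟩
  obtain ⟨Nr, hNr⟩ : ∃ Nr : ℝ, Nr = ((n - (t + r)).choose (k - t) : ℝ) := ⟨_, rfl⟩
  obtain ⟨N', hN'⟩ : ∃ N' : ℝ, N' = ((n - t - 1).choose (k - t - 1) : ℝ) := ⟨_, rfl⟩
  have hNp : 0 < N := by rw [hN]; exact_mod_cast Nat.choose_pos (by omega)
  have hνR : ((n - t : ℕ) : ℝ) = (n:ℝ) - t := by rw [Nat.cast_sub htn]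
  have hVR : (X:ℝ) ^ (2 * t + 5) ≤ ((n - t : ℕ) : ℝ) := by
    have : X ^ (2 * t + 5) ≤ n - t := by omega
    exact_mod_cast this
  have hνp : (0:ℝ) < ((n - t : ℕ) : ℝ) := lt_of_lt_of_le (by positivity) hVR
  have hNrN : (1 - η) * N ≤ Nr := by
    have h1 := choose_rel (n - t) (k - t) r (by omega)
    rw [Nat.sub_sub] at h1
    have h2 : ((n - t : ℕ) : ℝ) * N ≤ ((n - t : ℕ) : ℝ) * Nr + r * ((k - t : ℕ) : ℝ) * N := by
      rw [hN, hNr]; exact_mod_cast h1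
    have h3 : (r:ℝ) * ((k - t : ℕ) : ℝ) ≤ X := by
      have : r * (k - t) ≤ r * k := Nat.mul_le_mul_left _ (by omega)
      exact_mod_cast this.trans hrkX
    have h4 : (X:ℝ) ≤ η * ((n - t : ℕ) : ℝ) := by
      have h5 : (X:ℝ) ^ 2 ≤ ((n - t : ℕ) : ℝ) := by
        have : X ^ 2 ≤ n - t := by omega
        exact_mod_cast this
      calc (X:ℝ) = η * (X:ℝ) ^ 2 := by rw [sq, ← mul_assoc, hηX, one_mul]
        _ ≤ _ := mul_le_mul_of_nonneg_left h5 hη0.le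
    have h6 : (r:ℝ) * ((k - t : ℕ) : ℝ) * N ≤ η * ((n - t : ℕ) : ℝ) * N :=
      mul_le_mul_of_nonneg_right (h3.trans h4) hNp.le
    have h7 : ((n - t : ℕ) : ℝ) * ((1 - η) * N) ≤ ((n - t : ℕ) : ℝ) * Nr := by linarith
    exact le_of_mul_le_mul_left h7 hνp
  have hNrp : 0 < Nr := lt_of_lt_of_le (mul_pos (by linarith) hNp) hNrN
  -- cardinality of F
  have hLc := Lx_card n k t r (by omega) htk.le (by omega)
  have hLr : ((Lx n k t r).card : ℝ) = ∑ i ∈ Icc t (t + r - 1), ((n - i).choose (k - t) : ℝ) := by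
    rw [hLc]
    have : Icc t (t + r - 1) = Ico t (t + r) := by
      ext x; simp only [mem_Icc, mem_Ico]; omega
    rw [this, sum_Ico_eq_sum_range]
    push_cast
    simp
  rw [← hLr, ← hNr] at hcard
  have hLF : (Lx n k t r).card ≤ F.card := by
    have : ((Lx n k t r).card : ℝ) ≤ F.card := by
      rw [hcard]; have := mul_nonneg hδ0.le hNrp.le; linarith
    exact_mod_cast this
  obtain ⟨m0, hm0⟩ := Nat.exists_eq_add_of_le hLF
  have hm0R : (m0:ℝ) = δ * Nr := by
    have : (F.card:ℝ) = (Lx n k t r).card + m0 := by exact_mod_cast hm0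
    linarith
  have hm0le : m0 ≤ (n - (t + r)).choose (k - t) := by
    have : (m0:ℝ) ≤ Nr := by rw [hm0R]; exact mul_le_of_le_one_left hNrp.le hδ1
    rw [hNr] at this
    exact_mod_cast this
  obtain ⟨G, hG, hGc, hGI⟩ := lexcmp n k t r F.card m0 ht htk.le (by omega) hm0 hm0le
  have hGF : (totalInt G : ℝ) ≤ totalInt F := by exact_mod_cast hopt G hG hGc
  rw [← hN] at hGI
  have hLN : ((Lx n k t r).card : ℝ) ≤ r * N := by
    rw [hLc]
    push_cast
    calc ∑ i ∈ range r, ((n - (t + i)).choose (k - t) : ℝ) ≤ ∑ i ∈ range r, N := by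
          refine sum_le_sum fun i _ => ?_
          rw [hN]
          exact_mod_cast Nat.choose_le_choose _ (by omega)
      _ = _ := by simp
  have hLNr : r * Nr ≤ ((Lx n k t r).card : ℝ) := by
    rw [hLc]
    push_cast
    calc r * Nr = ∑ i ∈ range r, Nr := by simp
      _ ≤ _ := by
          refine sum_le_sum fun i hi => ?_
          have := mem_range.1 hi
          rw [hNr]
          exact_mod_cast Nat.choose_le_choose _ (by omega)
  have hNrle : Nr ≤ N := by
    rw [hN, hNr]; exact_mod_cast Nat.choose_le_choose _ (by omega)
  have hMp : (0:ℝ) < F.card := by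
    rw [hcard]; have := mul_pos hδ0 hNrp; positivity
  have hMN : (F.card:ℝ) ≤ (r + δ) * N := by
    rw [hcard]
    have := mul_le_mul_of_nonneg_left hNrle hδ0.le
    linarith
  have hMδ : δ * N ≤ F.card := by
    rcases Nat.eq_zero_or_pos r with h | h
    · have : Nr = N := by rw [hN, hNr, h]; rfl
      rw [hcard, this]
      have : (0:ℝ) ≤ (Lx n k t r).card := by positivity
      linarith
    · have h1 : N ≤ ((Lx n k t r).card : ℝ) := by
        rw [hLc]
        push_cast
        have := single_le_sum (s := range r) (f := fun i => ((n - (t + i)).choose (k - t) : ℝ))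
          (fun i _ => by positivity) (mem_range.2 h)
        rw [hN]
        simpa using this
      have := mul_nonneg hδ0.le hNrp.le
      rw [hcard]
      have h3 := mul_le_of_le_one_left hNp.le hδ1
      linarith
  obtain ⟨c, hc⟩ : ∃ c : ℝ, c = (r * N ^ 2 + (m0:ℝ) ^ 2) / (F.card:ℝ) ^ 2 := ⟨_, rfl⟩
  have hcb := c_bound r δ η F.card N Nr m0 hr0 hδ0.le hδ1 hη0.le (by linarith) hMp hNp hMN hMδ hNrN hm0R
  rw [← hc] at hcb
  have hI : ((t:ℝ) - 1 + c) * (F.card:ℝ) ^ 2 ≤ totalInt F := by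
    have : c * (F.card:ℝ) ^ 2 = r * N ^ 2 + (m0:ℝ) ^ 2 := by
      rw [hc]; field_simp
    linarith
  have hdel : 0 ≤ (r:ℝ) * (1 - δ) ^ 2 / (r + 1) ^ 3 := by positivity
  have hcr : 1 / ((r:ℝ) + 1) - 2 * η ≤ c := by linarith
  have hrη : η * (t ^ 2 * (r + 1)) ≤ 1 / 10 ^ 7 := by
    have : η * (t ^ 2 * ((r:ℝ) + 1)) * 1 ≤ η * (t ^ 2 * ((r:ℝ) + 1)) * (r + 1) :=
      mul_le_mul_of_nonneg_left (by linarith) (by positivity)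
    linarith
  have hinv : 10 ^ 7 * (η * t ^ 2) ≤ 1 / ((r:ℝ) + 1) := by
    rw [le_div_iff₀ (by linarith)]; linarith
  have hηle : η * 4 ≤ η * (t:ℝ) ^ 2 := mul_le_mul_of_nonneg_left (by nlinarith only [ht2]) hη0.le
  have hηle2 : η * (t:ℝ) * 2 ≤ η * (t:ℝ) ^ 2 := by
    have := mul_le_mul_of_nonneg_left ht2 (by positivity : 0 ≤ η * (t:ℝ))
    linarith
  by_contra hno
  push Not at hno
  -- apply the core lemma
  have hWY : ∀ Y ∈ (Icc 1 n).powersetCard t, ∀ A ∈ F, ∑ x ∈ Y, dg F x ≤ ∑ x ∈ A, dg F x := by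
    intro Y hY A hA
    have h1 : ¬ fullStar n k Y ⊆ F := fun h => hnostar ⟨Y, hY, h⟩
    obtain ⟨B, hB, hBF⟩ := not_subset.1 h1
    obtain ⟨hB1, hB2⟩ := mem_filter.1 hB
    exact (sum_le_sum_of_subset_of_nonneg hB2 (fun x _ _ => dg_nonneg F x)).trans
      (swap F n k hF hopt A B hA hB1 hBF)
  have hN'N : ((n - t : ℕ) : ℝ) * N' = N * ((k - t : ℕ) : ℝ) := by
    have := choose_ratio (n - t) (k - t - 1) (by omega)
    rw [Nat.sub_add_cancel (by omega)] at this
    rw [hN', hN]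
    exact_mod_cast this
  have hat : ∀ H ⊆ Icc 1 n, (H.card:ℝ) * η ≤ (k:ℝ) ^ 2 →
      (k:ℝ) * ((F.filter fun A => t < (A ∩ H).card).card : ℝ) ≤ η * F.card := by
    intro H hH hHc
    have h1 := atyp n k t F hF htk H hH
    have h1R : ((F.filter fun A => t < (A ∩ H).card).card : ℝ) ≤ (H.card:ℝ) ^ (t + 1) * N' := by
      rw [hN']; exact_mod_cast h1
    have hkXR : (k:ℝ) ^ 2 ≤ X := by exact_mod_cast hkX
    have h2 : (H.card:ℝ) ≤ (X:ℝ) ^ 2 := by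
      calc (H.card:ℝ) = (H.card:ℝ) * η * X := by rw [mul_assoc, hηX, mul_one]
        _ ≤ (k:ℝ) ^ 2 * X := by gcongr
        _ ≤ X * X := by gcongr
        _ = _ := by ring
    have h3 : (H.card:ℝ) ^ (t + 1) ≤ (X:ℝ) ^ (2 * t + 2) := by
      calc (H.card:ℝ) ^ (t + 1) ≤ ((X:ℝ) ^ 2) ^ (t + 1) := by gcongr
        _ = _ := by rw [← pow_mul]; ring_nf
    have hN'p : 0 ≤ N' := by rw [hN']; positivity
    have h4 : (k:ℝ) * ((F.filter fun A => t < (A ∩ H).card).card : ℝ) ≤ k * ((X:ℝ) ^ (2 * t + 2) * N') := by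
      refine mul_le_mul_of_nonneg_left (h1R.trans ?_) hk0.le
      exact mul_le_mul_of_nonneg_right h3 hN'p
    refine h4.trans ?_
    have h5 : η * (N * η) ≤ η * F.card := by
      refine mul_le_mul_of_nonneg_left (le_trans ?_ hMδ) hη0.le
      have h6 : η ≤ δ := by
        refine le_trans ?_ hδε
        rw [le_div_iff₀ (by positivity)]
        have h7 : η * (((r:ℝ) + 1) * 4) ≤ η * (t ^ 2 * (r + 1)) := by
          refine mul_le_mul_of_nonneg_left ?_ hη0.le
          have h70 : (4:ℝ) ≤ (t:ℝ) ^ 2 := by nlinarith only [ht2]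
          rw [mul_comm]
          exact mul_le_mul_of_nonneg_right h70 (by positivity)
        linarith
      rw [mul_comm]
      exact mul_le_mul_of_nonneg_right h6 hNp.le
    refine le_trans ?_ h5
    have h8 : ((n - t : ℕ) : ℝ) * (k * ((X:ℝ) ^ (2 * t + 2) * N')) ≤ ((n - t : ℕ) : ℝ) * (η * (N * η)) := by
      have hkt : ((k - t : ℕ) : ℝ) ≤ k := by exact_mod_cast Nat.sub_le k t
      calc ((n - t : ℕ) : ℝ) * (k * ((X:ℝ) ^ (2 * t + 2) * N'))
          = k * (X:ℝ) ^ (2 * t + 2) * (((n - t : ℕ) : ℝ) * N') := by ring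
        _ = k * (X:ℝ) ^ (2 * t + 2) * (N * ((k - t : ℕ) : ℝ)) := by rw [hN'N]
        _ ≤ k * (X:ℝ) ^ (2 * t + 2) * (N * k) := by gcongr
        _ = (k:ℝ) ^ 2 * ((X:ℝ) ^ (2 * t + 2) * N) := by ring
        _ ≤ X * ((X:ℝ) ^ (2 * t + 2) * N) := by gcongr
        _ = (η * X) * (η * X) * (X * ((X:ℝ) ^ (2 * t + 2) * N)) := by rw [hηX]; ring
        _ = (X:ℝ) ^ (2 * t + 5) * (η * (N * η)) := by
          rw [show 2 * t + 5 = (2 * t + 2) + 3 by ring, pow_add]; ring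
        _ ≤ _ := by gcongr
    exact le_of_mul_le_mul_left h8 hνp
  obtain ⟨hcup, T, hT, hFT⟩ := core n k t F hF ht htk η c hη0 (by linarith) (by exact_mod_cast hMp) hI hat hWY
    hno (by linarith) (by
      have h1 : 4 * (1 / ((r:ℝ) + 1) - 2 * η) ≤ (t + 2) * c := by
        have h2 : 0 ≤ 1 / ((r:ℝ) + 1) - 2 * η := by linarith
        calc 4 * (1 / ((r:ℝ) + 1) - 2 * η) ≤ (t + 2) * (1 / ((r:ℝ) + 1) - 2 * η) := by
              gcongr; linarith
          _ ≤ _ := by gcongr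
      linarith)
  -- r ≤ t
  have hU := U_card n k t F hF htk T hT hFT
  have hUR : (F.card:ℝ) ≤ (t + 1) * N := by rw [hN]; exact_mod_cast hU
  have hcup2 : ((t:ℝ) + 1) * (1 / ((r:ℝ) + 1) + r * (1 - δ) ^ 2 / (r + 1) ^ 3) ≤ 1 + 5 * (η * t ^ 2) := by
    have h1 : ((t:ℝ) + 1) * (1 / ((r:ℝ) + 1) + r * (1 - δ) ^ 2 / (r + 1) ^ 3 - 2 * η) ≤ (t + 1) * c := by
      gcongr
    linarith
  rcases lt_trichotomy r t with hrt | hrt | hrt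
  · have h1 : (r:ℝ) + 1 ≤ t := by exact_mod_cast hrt
    have h2 : 1 / (t:ℝ) ≤ 1 / ((r:ℝ) + 1) := one_div_le_one_div_of_le (by linarith) h1
    have h3 : ((t:ℝ) + 1) * (1 / (t:ℝ)) ≤ 1 + 5 * (η * t ^ 2) := by
      refine le_trans ?_ hcup2
      gcongr
      linarith
    have h4 : ((t:ℝ) + 1) * (1 / (t:ℝ)) = 1 + 1 / t := by field_simp
    -- need 1/t large; use the full strength of X
    have h5 : 10 ^ 6 * (η * (t:ℝ) ^ 3) ≤ 1 := by
      have h6 : (t:ℝ) ^ 3 ≤ (k:ℝ) ^ 2 * (t:ℝ) ^ 4 * ((r:ℝ) + 1) ^ 7 := by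
        have h7 : (1:ℝ) ≤ ((r:ℝ) + 1) ^ 7 := one_le_pow₀ (by linarith)
        have h8 : (1:ℝ) ≤ (k:ℝ) ^ 2 := one_le_pow₀ (by linarith)
        calc (t:ℝ) ^ 3 ≤ 1 * (t:ℝ) ^ 4 * 1 := by
              rw [one_mul, mul_one]; exact pow_le_pow_right₀ (by linarith) (by norm_num)
          _ ≤ _ := by gcongr
      have h9 : η * (10 ^ 6 * (t:ℝ) ^ 3) ≤ η * X := by
        rw [hXr]; gcongr
      linarith
    have h10 : 1 / (t:ℝ) ≤ 5 * (η * t ^ 2) := by linarith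
    rw [div_le_iff₀ ht0] at h10
    have h11 : 5 * (η * (t:ℝ) ^ 2) * t = 5 * (η * (t:ℝ) ^ 3) := by ring
    rw [h11] at h10
    clear hXr hcb hcup2 h3 h2 hδ
    linarith
  · subst hrt
    rcases hδ with h | h
    · have h1 : 60 / (10 ^ 6 * ((r:ℝ) + 1)) ≤ 1 - δ := by linarith [h.2]
      have h2 := hηb rfl
      have h3 : ((r:ℝ) + 1) * (1 / ((r:ℝ) + 1) + r * (1 - δ) ^ 2 / (r + 1) ^ 3) =
          1 + r * (1 - δ) ^ 2 / (r + 1) ^ 2 := by field_simp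
      rw [h3] at hcup2
      have h4 : r * (1 - δ) ^ 2 / ((r:ℝ) + 1) ^ 2 ≤ 5 * (η * r ^ 2) := by linarith
      have h5 : (60 / (10 ^ 6 * ((r:ℝ) + 1))) ^ 2 ≤ (1 - δ) ^ 2 := by gcongr
      rw [div_le_iff₀ (by positivity)] at h4
      have h6 : (r:ℝ) * (60 / (10 ^ 6 * ((r:ℝ) + 1))) ^ 2 ≤ r * (5 * (η * r) * (r + 1) ^ 2) := by
        calc (r:ℝ) * (60 / (10 ^ 6 * ((r:ℝ) + 1))) ^ 2 ≤ r * (1 - δ) ^ 2 := by gcongr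
          _ ≤ _ := h4
          _ = _ := by ring
      have h7 := le_of_mul_le_mul_left h6 ht0
      rw [div_pow, div_le_iff₀ (by positivity)] at h7
      have h8 : 5 * (η * (r:ℝ)) * (r + 1) ^ 2 * (10 ^ 6 * (r + 1)) ^ 2 = 5 * 10 ^ 12 * (η * (r * (r + 1) ^ 4)) := by ring
      rw [h8] at h7
      clear hXr hcb hcup2 h3 h4 h5 h6 h1 h8
      linarith
    · -- δ = 1
      have hFL : F.card = (Lx n k r (r + 1)).card := by
        have h1 : (F.card:ℝ) = (Lx n k r r).card + (n - (r + r)).choose (k - r) := by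
          rw [hcard, h, one_mul, hNr]
        have h2 : F.card = (Lx n k r r).card + (n - (r + r)).choose (k - r) := by exact_mod_cast h1
        rw [h2, Lx_succ, card_union_of_disjoint (Lx_disj n k r r),
          stE_card n k r (r + r) (by omega) htk.le (by omega) (by omega)]
      have hbig : 100 * k ^ 2 * r ^ 4 + r ≤ n := by
        have h1 : 100 * k ^ 2 * r ^ 4 ≤ X := by
          rw [hXeq]
          have h2 : 1 ≤ (r + 1) ^ 7 := Nat.one_le_pow _ _ (by omega)
          calc 100 * k ^ 2 * r ^ 4 = 100 * (k ^ 2 * r ^ 4 * 1) := by ring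
            _ ≤ 10 ^ 6 * (k ^ 2 * r ^ 4 * (r + 1) ^ 7) := by
              gcongr; norm_num
        omega
      have hlt := second n k r ht htk hbig F hF T hT hFT hFL
      have hle : (totalInt (Lx n k r (r + 1)) : ℝ) ≤ totalInt F := by
        exact_mod_cast hopt _ (filter_subset _ _) hFL.symm
      linarith
  · have h1 : (t:ℝ) + 1 ≤ r := by exact_mod_cast hrt
    have h2 : ((r:ℝ) + δ) * ((1 - η) * N) ≤ r * N := by
      calc ((r:ℝ) + δ) * ((1 - η) * N) ≤ (r + δ) * Nr := by gcongr
        _ ≤ F.card := by rw [hcard]; linarith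
        _ ≤ (t + 1) * N := hUR
        _ ≤ _ := by gcongr
    have h3 : (((r:ℝ) + δ) * (1 - η)) * N ≤ r * N := by linarith
    have h4 := le_of_mul_le_mul_right h3 hNp
    have h5 : δ ≤ (r + 1) * η := by
      have h50 : ((r:ℝ) + δ) * η ≤ (r + 1) * η := mul_le_mul_of_nonneg_right (by linarith only [hδ1]) hη0.le
      linarith only [h4, h50]
    have h6 := hδε.trans h5
    rw [div_le_iff₀ (by positivity)] at h6
    have h7 : η * (((r:ℝ) + 1) ^ 2) ≤ η * (t ^ 2 * (r + 1) ^ 2) := by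
      refine mul_le_mul_of_nonneg_left ?_ hη0.le
      exact le_mul_of_one_le_left (by positivity) (one_le_pow₀ (by linarith only [ht2]))
    linarith

/-- **Lemma.** If an optimal family `F` (of the size in the main theorem, `t ≥ 2`) contains
no full `t`-star, then all members of `F` share a common element. -/
theorem stmt14 (k r t n : ℕ) (hk : 2 ≤ k) (ht : 2 ≤ t)
    (hn : Cconst k t r 1 * (3 * t * Cconst k t r t) ^ (2 * t) ≤ n)
    (δ : ℝ)
    (hδ : (60 * (k : ℝ) ^ 2 * ((r : ℝ) + 1) ^ 6 * (t : ℝ) ^ 4 / (Cconst k t r 1 : ℝ) ≤ δ ∧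
           δ ≤ 1 - 60 * (k : ℝ) ^ 2 * ((r : ℝ) + 1) ^ 6 * (t : ℝ) ^ 4 / (Cconst k t r 1 : ℝ)) ∨
          δ = 1)
    (F : Finset (Finset ℕ)) (hF : F ⊆ (Icc 1 n).powersetCard k)
    (hcard : (F.card : ℝ) =
      (∑ i ∈ Icc t (t + r - 1), ((n - i).choose (k - t) : ℝ)) +
        δ * ((n - (t + r)).choose (k - t) : ℝ))
    (hopt : ∀ G ⊆ (Icc 1 n).powersetCard k, G.card = F.card → totalInt G ≤ totalInt F)
    (hnostar : ¬ ∃ Y ∈ (Icc 1 n).powersetCard t, fullStar n k Y ⊆ F) :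
    ∃ x ∈ Icc 1 n, ∀ A ∈ F, x ∈ A := by
  exact main_aux k r t n (Cconst k t r 1) hk ht (nbound k r t n hk ht hn) (C1_eq k t r) δ hδ F hF
    hcard hopt hnostar
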